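/- There are constants C, c > 0 such that for every t > 0 there exist two sequences of maps (A_n^t)_{n ∈ ℕ} and (B_n^t)_{n ∈ ℕ}, sending finitely supported functions ℤ → ℂ to functions ℤ → ℂ, such that for every finitely supported f : ℤ → ℂ: (i) ℳ_{2^n} f = A_n^t f + B_n^t f for all n ∈ ℕ; (ii) sup_{λ>0} λ · #{x ∈ ℤ : sup_{n ∈ ℕ} |A_n^t f(x)| > λ} ≤ C t ‖f‖_{ℓ¹(ℤ)}; (iii) ‖ sup_{n ∈ ℕ} |B_n^t f| ‖_{ℓ²(ℤ)} ≤ C exp(−c √t) ‖f‖_{ℓ²(ℤ)}. -/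

import Mathlib

open scoped BigOperators

/-- The set of primes `p ≤ N`. -/
def primesUpTo (N : ℕ) : Finset ℕ := (Finset.range (N + 1)).filter Nat.Prime

/-- `ϑ(N) = Σ_{p ∈ ℙ_N} log p`. -/
noncomputable def theta (N : ℕ) : ℝ := ∑ p ∈ primesUpTo N, Real.log p

/-- The weighted average `ℳ_N f(x) = (1/ϑ(N)) Σ_{p ∈ ℙ_N} f(x + p) log p`. -/
noncomputable def weightedPrimeAvg (f : ℤ → ℂ) (N : ℕ) (x : ℤ) : ℂ :=
  ((theta N : ℂ))⁻¹ * ∑ p ∈ primesUpTo N, f (x + p) * (Real.log p : ℂ)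

namespace PM
open scoped ENNReal
open MeasureTheory

/-- the `ℓ²` norm of a `[0,∞]`-valued function on the integers -/
noncomputable def nrm (F : ℤ → ℝ≥0∞) : ℝ≥0∞ := (∑' x, F x ^ 2) ^ (1 / 2 : ℝ)

lemma nrm_sq (F : ℤ → ℝ≥0∞) : nrm F ^ 2 = ∑' x, F x ^ 2 := by
  unfold nrm
  rw [← ENNReal.rpow_natCast, ← ENNReal.rpow_mul]
  norm_num

lemma nrm_le_of_sq {F : ℤ → ℝ≥0∞} {a : ℝ≥0∞} (h : ∑' x, F x ^ 2 ≤ a ^ 2) : nrm F ≤ a := by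
  rw [← nrm_sq] at h
  exact (ENNReal.pow_le_pow_left_iff (by norm_num)).1 h

lemma nrm_mono {F G : ℤ → ℝ≥0∞} (h : ∀ x, F x ≤ G x) : nrm F ≤ nrm G := by
  apply nrm_le_of_sq
  rw [nrm_sq]
  exact ENNReal.tsum_le_tsum fun x => by gcongr; exact h x

lemma nrm_add_le (F G : ℤ → ℝ≥0∞) : nrm (fun x => F x + G x) ≤ nrm F + nrm G := by
  have := ENNReal.lintegral_Lp_add_le (μ := Measure.count) (p := 2) (f := F) (g := G)
    (measurable_from_top.aemeasurable) (measurable_from_top.aemeasurable) (by norm_num)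
  simp only [lintegral_count, Pi.add_apply] at this
  unfold nrm
  simpa using this

lemma nrm_zero : nrm (fun _ => 0) = 0 := by
  simp [nrm]

lemma nrm_sum_le {ι : Type*} (s : Finset ι) (F : ι → ℤ → ℝ≥0∞) :
    nrm (fun x => ∑ i ∈ s, F i x) ≤ ∑ i ∈ s, nrm (F i) := by
  classical
  induction s using Finset.induction_on with
  | empty => simp [nrm_zero]
  | insert a s ha ih =>
    simp only [Finset.sum_insert ha]
    exact (nrm_add_le _ _).trans (by gcongr)

lemma nrm_const_mul (c : ℝ≥0∞) (F : ℤ → ℝ≥0∞) : nrm (fun x => c * F x) = c * nrm F := by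
  have h : nrm (fun x => c * F x) ^ 2 = (c * nrm F) ^ 2 := by
    rw [nrm_sq, mul_pow, nrm_sq]
    simp_rw [mul_pow]
    rw [ENNReal.tsum_mul_left]
  exact le_antisymm ((ENNReal.pow_le_pow_left_iff (by norm_num)).1 h.le)
    ((ENNReal.pow_le_pow_left_iff (by norm_num)).1 h.ge)

lemma nrm_shift (F : ℤ → ℝ≥0∞) (a : ℤ) : nrm (fun x => F (x + a)) = nrm F := by
  unfold nrm
  congr 1
  exact (Equiv.addRight a).tsum_eq (fun x => F x ^ 2)

lemma nrm_iSup_mono {F : ℕ → ℤ → ℝ≥0∞} (hF : Monotone F) {a : ℝ≥0∞} (h : ∀ n, nrm (F n) ≤ a) :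
    nrm (fun x => ⨆ n, F n x) ≤ a := by
  apply nrm_le_of_sq
  have h1 : ∀ x, (⨆ n, F n x) ^ 2 = ⨆ n, (F n x) ^ 2 := by
    intro x
    have hm : Monotone (fun y : ℝ≥0∞ => y ^ 2) := fun a b hab => by dsimp; gcongr
    exact hm.map_iSup_of_continuousAt (by fun_prop) (by simp)
  simp_rw [h1]
  have := lintegral_iSup (μ := (Measure.count : Measure ℤ)) (f := fun n x => F n x ^ 2)
    (fun n => measurable_from_top) (fun i j hij x => by dsimp; gcongr; exact hF hij x)
  simp only [lintegral_count] at this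
  rw [this]
  apply iSup_le
  intro n
  rw [← nrm_sq]
  gcongr
  exact h n

lemma nrm_tsum_le (F : ℕ → ℤ → ℝ≥0∞) :
    nrm (fun x => ∑' i, F i x) ≤ ∑' i, nrm (F i) := by
  simp_rw [ENNReal.tsum_eq_iSup_nat (f := fun i => F i _)]
  apply nrm_iSup_mono (F := fun n x => ∑ i ∈ Finset.range n, F i x)
  · intro i j hij x
    exact Finset.sum_le_sum_of_subset (Finset.range_mono hij)
  · intro n
    exact (nrm_sum_le _ _).trans (ENNReal.sum_le_tsum _)

lemma nrm_sup_le (F : ℕ → ℤ → ℝ≥0∞) :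
    nrm (fun x => ⨆ i, F i x) ≤ ∑' i, nrm (F i) :=
  (nrm_mono fun x => iSup_le fun i => ENNReal.le_tsum i).trans (nrm_tsum_le F)

/-- norm of a real function -/
noncomputable def rn (f : ℤ → ℝ) : ℝ≥0∞ := nrm (fun x => ‖f x‖ₑ)

lemma enorm_real (r : ℝ) : ‖r‖ₑ = ENNReal.ofReal |r| := by
  rw [← Real.norm_eq_abs, ofReal_norm]

lemma rn_conv_le {ι : Type*} (s : Finset ι) (k : ι → ℝ) (a : ι → ℤ) (f : ℤ → ℝ) :
    rn (fun x => ∑ i ∈ s, k i * f (x + a i)) ≤ ENNReal.ofReal (∑ i ∈ s, |k i|) * rn f := by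
  unfold rn
  calc nrm (fun x => ‖∑ i ∈ s, k i * f (x + a i)‖ₑ)
      ≤ nrm (fun x => ∑ i ∈ s, ‖k i‖ₑ * ‖f (x + a i)‖ₑ) := by
        apply nrm_mono
        intro x
        refine (enorm_sum_le _ _).trans ?_
        simp [enorm_mul]
    _ ≤ ∑ i ∈ s, nrm (fun x => ‖k i‖ₑ * ‖f (x + a i)‖ₑ) := nrm_sum_le _ _
    _ = _ := by
        rw [ENNReal.ofReal_sum_of_nonneg (fun i _ => abs_nonneg _), Finset.sum_mul]
        apply Finset.sum_congr rfl
        intro i _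
        rw [nrm_const_mul, nrm_shift (fun x => ‖f x‖ₑ), enorm_real]

lemma rn_sq (f : ℤ → ℝ) (hf : f.support.Finite) : rn f ^ 2 = ENNReal.ofReal (∑' x, f x ^ 2) := by
  unfold rn
  rw [nrm_sq, ENNReal.ofReal_tsum_of_nonneg (fun x => sq_nonneg _)]
  · congr 1; ext x
    rw [enorm_real, ← ENNReal.ofReal_pow (abs_nonneg _), sq_abs]
  · apply summable_of_hasFiniteSupport
    exact hf.subset (by intro x hx; contrapose! hx; simp_all)

lemma rn_ne_top (f : ℤ → ℝ) (hf : f.support.Finite) : rn f ≠ ⊤ := by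
  intro h
  have := rn_sq f hf
  simp [h] at this

end PM

namespace PM
open scoped ENNReal
open MeasureTheory

/-- partial sums along the progression with step `d` -/
noncomputable def psum (d : ℤ) (f : ℤ → ℝ) (J : ℕ) (x : ℤ) : ℝ :=
  ∑ j ∈ Finset.range J, f (x + (j + 1) * d)

lemma psum_succ (d : ℤ) (f : ℤ → ℝ) (J : ℕ) (x : ℤ) :
    psum d f (J + 1) x = f (x + d) + psum d f J (x + d) := by
  unfold psum
  rw [Finset.sum_range_succ']
  rw [add_comm]
  congr 1
  · simp
  · apply Finset.sum_congr rfl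
    intro j _
    congr 1
    push_cast
    ring

lemma psum_nonneg {d : ℤ} {f : ℤ → ℝ} (hf : ∀ x, 0 ≤ f x) (J : ℕ) (x : ℤ) : 0 ≤ psum d f J x :=
  Finset.sum_nonneg fun _ _ => hf _

/-- sets of positivity of finitely many partial sums are finite -/
lemma psum_support_finite (d : ℤ) (f : ℤ → ℝ) (hfin : f.support.Finite) (K : ℕ) :
    {x | ∃ J, J ≤ K ∧ psum d f J x ≠ 0}.Finite := by
  have : {x | ∃ J, J ≤ K ∧ psum d f J x ≠ 0} ⊆
      ⋃ j ∈ Finset.range K, Set.image (fun y => y - ((j : ℤ) + 1) * d) f.support := by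
    rintro x ⟨J, hJ, hx⟩
    obtain ⟨j, hj, hne⟩ := Finset.exists_ne_zero_of_sum_ne_zero hx
    simp only [Set.mem_iUnion]
    refine ⟨j, ?_, x + (j + 1) * d, hne, by ring⟩
    simp at hj ⊢; omega
  refine Set.Finite.subset ?_ this
  exact Set.Finite.biUnion (Finset.finite_toSet _) fun j _ => hfin.image _

lemma exists_max (φ : ℕ → ℤ → ℝ) (K : ℕ) : ∃ F : ℤ → ℝ, (∀ J x, J ≤ K → φ J x ≤ F x) ∧
    ∀ x, ∃ J, J ≤ K ∧ F x = φ J x := by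
  have : ∀ x, ∃ y, (∀ J, J ≤ K → φ J x ≤ y) ∧ ∃ J, J ≤ K ∧ y = φ J x := by
    intro x
    obtain ⟨I, hI, hIe⟩ := Finset.exists_max_image (Finset.range (K + 1)) (fun J => φ J x)
      ⟨0, by simp⟩
    refine ⟨φ I x, fun J hJ => hIe J (by simp; omega), I, by simp at hI; omega, rfl⟩
  choose F h1 h2 using this
  exact ⟨F, fun J x hJ => h1 x J hJ, h2⟩

/-- Hopf maximal lemma -/
lemma hopf (d : ℤ) (f : ℤ → ℝ) (hf : ∀ x, 0 ≤ f x) (hfin : f.support.Finite) (K : ℕ) (l : ℝ)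
    (hl : 0 < l) (E : Finset ℤ)
    (hE : ∀ x, x ∈ E ↔ ∃ J, J ≤ K ∧ l * J < psum d f J x) :
    l * E.card ≤ ∑ x ∈ E, f (x + d) := by
  obtain ⟨F, hF1, hF2⟩ := exists_max (fun J x => psum d f J x - l * J) K
  have hF0 : ∀ x, 0 ≤ F x := by
    intro x
    have := hF1 0 x (by omega)
    simpa [psum] using this
  have hFE : ∀ x, x ∉ E → F x = 0 := by
    intro x hx
    apply le_antisymm _ (hF0 x)
    obtain ⟨J, hJ, h⟩ := hF2 x
    rw [hE] at hx
    push Not at hx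
    have := hx J hJ
    linarith
  have hstep : ∀ x ∈ E, F x ≤ f (x + d) - l + F (x + d) := by
    intro x hx
    obtain ⟨J, hJ, hlt⟩ := (hE x).1 hx
    have hpos : 0 < F x := by
      have := hF1 J x hJ
      linarith
    obtain ⟨I, hI, hFI⟩ := hF2 x
    rcases I with _ | I
    · simp [psum] at hFI; linarith
    · have h2 := hF1 I (x + d) (by omega)
      rw [hFI, psum_succ]
      push_cast
      linarith
  have hs : F.support ⊆ E := by
    intro x hx
    by_contra h
    exact hx (hFE x h)
  have hsum : Summable F := summable_of_hasFiniteSupport (E.finite_toSet.subset hs)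
  have h1 : ∑' x, F x = ∑ x ∈ E, F x := tsum_eq_sum fun x hx => hFE x hx
  have hsum' : Summable (fun x => F (x + d)) := (Equiv.addRight d).summable_iff.2 hsum
  have h2 : ∑ x ∈ E, F (x + d) ≤ ∑' x, F (x + d) :=
    hsum'.sum_le_tsum _ fun x _ => hF0 _
  have h3 : ∑' x, F (x + d) = ∑' x, F x := (Equiv.addRight d).tsum_eq F
  have h4 := Finset.sum_le_sum hstep
  simp only [Finset.sum_add_distrib, Finset.sum_sub_distrib, Finset.sum_const, nsmul_eq_mul] at h4
  linarith

/-- weak type (1,1) -/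
lemma weak (f : ℤ → ℝ) (hf : ∀ x, 0 ≤ f x) (hfin : f.support.Finite) (l : ℝ)
    (hl : 0 < l) :
    {x | ∃ J, l * J < psum 1 f J x}.Finite ∧
    l * ({x | ∃ J, l * J < psum 1 f J x}.ncard : ℝ) ≤ ∑' x, f x := by
  set E := {x | ∃ J, l * J < psum 1 f J x} with hE
  have key : ∀ s : Finset ℤ, (s : Set ℤ) ⊆ E → l * s.card ≤ ∑' x, f x := by
    intro s hs
    have hs' : ∀ x, ∃ J : ℕ, x ∈ s → l * J < psum 1 f J x := by
      intro x
      by_cases hx : x ∈ s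
      · obtain ⟨J, hJ⟩ := hs hx
        exact ⟨J, fun _ => hJ⟩
      · exact ⟨0, fun h => absurd h hx⟩
    choose J hJ using hs'
    set K := s.sup J
    have hfinK : {x | ∃ J, J ≤ K ∧ l * J < psum 1 f J x}.Finite := by
      refine (psum_support_finite 1 f hfin K).subset ?_
      rintro x ⟨J, h1, h2⟩
      exact ⟨J, h1, by have : 0 ≤ l * J := by positivity
                       linarith⟩
    have h := hopf 1 f hf hfin K l hl hfinK.toFinset (by intro x; simp)
    have hsub : s ⊆ hfinK.toFinset := by
      intro x hx
      simp only [Set.Finite.mem_toFinset]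
      exact ⟨J x, Finset.le_sup hx, hJ x hx⟩
    have hc : (s.card : ℝ) ≤ hfinK.toFinset.card := by exact_mod_cast Finset.card_le_card hsub
    have hsumm : Summable (fun x => f (x + 1)) :=
      (Equiv.addRight (1:ℤ)).summable_iff.2 (summable_of_hasFiniteSupport hfin)
    calc l * s.card ≤ l * hfinK.toFinset.card := by gcongr
      _ ≤ _ := h
      _ ≤ ∑' x, f (x + 1) := hsumm.sum_le_tsum _ fun x _ => hf _
      _ = _ := (Equiv.addRight (1:ℤ)).tsum_eq f
  have hEfin : E.Finite := by
    by_contra hinf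
    obtain ⟨n, hn⟩ := exists_nat_gt ((∑' x, f x) / l)
    obtain ⟨s, hs, hc⟩ := Set.Infinite.exists_subset_card_eq hinf n
    have := key s hs
    rw [hc] at this
    rw [div_lt_iff₀ hl] at hn
    linarith
  refine ⟨hEfin, ?_⟩
  rw [Set.ncard_eq_toFinset_card _ hEfin]
  exact key _ (by simp)

/-- layer cake -/
lemma layer (X : Finset ℤ) (g h : ℤ → ℝ) (hg : ∀ x, 0 ≤ g x) (hh : ∀ x, 0 ≤ h x)
    (H : ∀ l : ℝ, 0 < l → l * ((X.filter (fun x => l < g x)).card : ℝ) ≤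
      ∑ x ∈ X.filter (fun x => l < g x), h x) :
    ∑ x ∈ X, g x ^ 2 ≤ 2 * ∑ x ∈ X, h x * g x := by
  have e1 : ∀ a : ℝ, 0 ≤ a → ∀ φ : ℝ → ℝ≥0∞,
      ∫⁻ l in Set.Ioi (0:ℝ), (Set.Iio a).indicator φ l = ∫⁻ l in Set.Ioo 0 a, φ l := by
    intro a _ φ
    rw [lintegral_indicator measurableSet_Iio, Measure.restrict_restrict measurableSet_Iio,
      Set.inter_comm, Set.Ioi_inter_Iio]
  have e2 : ∀ a : ℝ, 0 ≤ a → ∫⁻ l in Set.Ioo 0 a, ENNReal.ofReal l = ENNReal.ofReal (a ^ 2 / 2) := by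
    intro a ha
    rw [← ofReal_integral_eq_lintegral_ofReal]
    · rw [← integral_Ioc_eq_integral_Ioo, ← intervalIntegral.integral_of_le ha, integral_id]
      simp
    · exact (continuous_id.integrableOn_Icc (a := 0) (b := a)).mono_set Set.Ioo_subset_Icc_self
    · rw [Filter.EventuallyLE, ae_restrict_iff' measurableSet_Ioo]
      exact Filter.Eventually.of_forall fun x hx => hx.1.le
  have m1 : ∀ x ∈ X, Measurable (fun l : ℝ => (Set.Iio (g x)).indicator ENNReal.ofReal l) :=
    fun x _ => ENNReal.measurable_ofReal.indicator measurableSet_Iio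
  have m2 : ∀ x ∈ X, Measurable
      (fun l : ℝ => (Set.Iio (g x)).indicator (fun _ => ENNReal.ofReal (h x)) l) :=
    fun x _ => measurable_const.indicator measurableSet_Iio
  have key : ∑ x ∈ X, ENNReal.ofReal (g x ^ 2 / 2) ≤ ∑ x ∈ X, ENNReal.ofReal (h x * g x) := by
    calc ∑ x ∈ X, ENNReal.ofReal (g x ^ 2 / 2)
        = ∑ x ∈ X, ∫⁻ l in Set.Ioi (0:ℝ), (Set.Iio (g x)).indicator ENNReal.ofReal l := by
          apply Finset.sum_congr rfl
          intro x _
          rw [e1 _ (hg x), e2 _ (hg x)]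
      _ = ∫⁻ l in Set.Ioi (0:ℝ), ∑ x ∈ X, (Set.Iio (g x)).indicator ENNReal.ofReal l := by
          rw [lintegral_finsetSum' _ fun x hx => (m1 x hx).aemeasurable]
      _ ≤ ∫⁻ l in Set.Ioi (0:ℝ), ∑ x ∈ X,
            (Set.Iio (g x)).indicator (fun _ => ENNReal.ofReal (h x)) l := by
          apply setLIntegral_mono' measurableSet_Ioi
          intro l hl
          have hl : 0 < l := hl
          have := ENNReal.ofReal_le_ofReal (H l hl)
          simp only [Set.indicator_apply, Set.mem_Iio]
          rw [← Finset.sum_filter, ← Finset.sum_filter,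
            ← ENNReal.ofReal_sum_of_nonneg (fun x _ => hh x)]
          refine le_trans (le_of_eq ?_) this
          rw [Finset.sum_const, ENNReal.ofReal_mul hl.le, ENNReal.ofReal_natCast, nsmul_eq_mul,
            mul_comm]
      _ = ∑ x ∈ X, ∫⁻ l in Set.Ioi (0:ℝ),
            (Set.Iio (g x)).indicator (fun _ => ENNReal.ofReal (h x)) l := by
          rw [lintegral_finsetSum' _ fun x hx => (m2 x hx).aemeasurable]
      _ = _ := by
          apply Finset.sum_congr rfl
          intro x _
          rw [e1 _ (hg x), setLIntegral_const, Real.volume_Ioo, sub_zero,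
            ENNReal.ofReal_mul (hh x)]
  rw [← ENNReal.ofReal_sum_of_nonneg (fun x _ => by positivity),
    ← ENNReal.ofReal_sum_of_nonneg (fun x _ => mul_nonneg (hh x) (hg x)),
    ENNReal.ofReal_le_ofReal_iff (Finset.sum_nonneg fun x _ => mul_nonneg (hh x) (hg x)),
    ← Finset.sum_div] at key
  linarith

/-- the one-sided maximal function along a progression -/
noncomputable def HL (d : ℤ) (f : ℤ → ℝ) (x : ℤ) : ℝ≥0∞ :=
  ⨆ J : ℕ, ENNReal.ofReal (psum d f J x / J)

lemma HL_nrm (d : ℤ) (f : ℤ → ℝ) (hf : ∀ x, 0 ≤ f x) (hfin : f.support.Finite) :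
    nrm (HL d f) ≤ 2 * rn f := by
  choose g hg1 hg2 using fun K => exists_max (fun J x => psum d f J x / J) K
  have hle : ∀ K J x, J ≤ K → psum d f J x / J ≤ g K x := fun K J x hJ => hg1 K J x hJ
  have hg0 : ∀ K x, 0 ≤ g K x := fun K x => by simpa [psum] using hle K 0 x (by omega)
  have hgfin : ∀ K, (g K).support.Finite := by
    intro K
    refine (psum_support_finite d f hfin K).subset ?_
    intro x hx
    by_contra h
    simp only [Set.mem_ofPred_eq, not_exists, not_and, not_not] at h
    apply hx
    obtain ⟨J, hJ, h3⟩ := hg2 K x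
    rw [h3, h J hJ]; simp
  have hK : ∀ K, rn (g K) ≤ 2 * rn f := by
    intro K
    rw [← ENNReal.pow_le_pow_left_iff (n := 2) (by norm_num), mul_pow, rn_sq _ (hgfin K),
      rn_sq _ hfin]
    have h4 : (2:ℝ≥0∞) ^ 2 = ENNReal.ofReal 4 := by norm_num
    rw [h4, ← ENNReal.ofReal_mul (by norm_num)]
    apply ENNReal.ofReal_le_ofReal
    have hl := layer (hgfin K).toFinset (g K) (fun x => f (x + d)) (hg0 K) (fun x => hf _) (by
      intro l hl
      apply hopf d f hf hfin K l hl
      intro x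
      simp only [Finset.mem_filter, Set.Finite.mem_toFinset, Function.mem_support]
      constructor
      · rintro ⟨_, h⟩
        obtain ⟨J, hJ, h3⟩ := hg2 K x
        have hlt : l < psum d f J x / J := by rw [← h3]; exact h
        refine ⟨J, hJ, ?_⟩
        rcases Nat.eq_zero_or_pos J with rfl | hJ0
        · simp at hlt; linarith
        · rwa [lt_div_iff₀ (by exact_mod_cast hJ0)] at hlt
      · rintro ⟨J, hJ, hlt⟩
        have : l < g K x := by
          refine lt_of_lt_of_le ?_ (hle K J x hJ)
          rcases Nat.eq_zero_or_pos J with rfl | hJ0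
          · simp [psum] at hlt
          · rwa [lt_div_iff₀ (by exact_mod_cast hJ0)]
        exact ⟨by linarith, this⟩)
    have h1 : ∑' x, g K x ^ 2 = ∑ x ∈ (hgfin K).toFinset, g K x ^ 2 := by
      apply tsum_eq_sum
      intro x hx
      simp at hx
      simp [hx]
    have hs : Summable (fun x => f x ^ 2) := summable_of_hasFiniteSupport
      (hfin.subset (by intro x hx; contrapose! hx; simp_all))
    have h2 : ∑ x ∈ (hgfin K).toFinset, f (x + d) ^ 2 ≤ ∑' x, f x ^ 2 := by
      rw [← (Equiv.addRight d).tsum_eq (fun x => f x ^ 2)]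
      exact ((Equiv.addRight d).summable_iff.2 hs).sum_le_tsum _ fun x _ => sq_nonneg _
    rw [h1]
    have h3 : 2 * ∑ x ∈ (hgfin K).toFinset, f (x + d) * g K x ≤
        ∑ x ∈ (hgfin K).toFinset, (g K x ^ 2 / 2 + 2 * f (x + d) ^ 2) := by
      rw [Finset.mul_sum]
      apply Finset.sum_le_sum
      intro x _
      nlinarith [sq_nonneg (g K x - 2 * f (x + d))]
    rw [Finset.sum_add_distrib, ← Finset.sum_div, ← Finset.mul_sum] at h3
    linarith
  have hmono : Monotone (fun K x => ‖g K x‖ₑ) := by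
    intro K L hKL x
    dsimp
    rw [enorm_real, enorm_real, abs_of_nonneg (hg0 _ _), abs_of_nonneg (hg0 _ _)]
    apply ENNReal.ofReal_le_ofReal
    obtain ⟨J, hJ, h3⟩ := hg2 K x
    rw [h3]
    exact hle L J x (by omega)
  refine (nrm_mono ?_).trans (nrm_iSup_mono hmono hK)
  intro x
  apply iSup_le
  intro J
  refine le_trans ?_ (le_iSup _ J)
  rw [enorm_real, abs_of_nonneg (hg0 _ _)]
  exact ENNReal.ofReal_le_ofReal (hle J J x le_rfl)

end PM

namespace PM
open scoped ENNReal
open MeasureTheory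

/-- local factor -/
noncomputable def chi (p : ℕ) (n : ℤ) : ℝ := (p : ℝ) * (if (p : ℤ) ∣ n then 1 else 0) - 1

/-- Ramanujan sum of the squarefree number with set of prime factors `W` -/
noncomputable def cW (W : Finset ℕ) (n : ℤ) : ℝ := ∏ p ∈ W, chi p n

/-- product of the elements of `W` -/
def qW (W : Finset ℕ) : ℕ := ∏ p ∈ W, p

lemma chi_abs {p : ℕ} (hp : p.Prime) (n : ℤ) : |chi p n| ≤ p := by
  have : (2:ℝ) ≤ p := by exact_mod_cast hp.two_le
  unfold chi
  rw [abs_le]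
  split_ifs <;> constructor <;> linarith

lemma cW_abs {W : Finset ℕ} (hW : ∀ p ∈ W, p.Prime) (n : ℤ) : |cW W n| ≤ qW W := by
  unfold cW qW
  rw [Finset.abs_prod]
  push_cast
  exact Finset.prod_le_prod (fun _ _ => abs_nonneg _) fun p hp => chi_abs (hW p hp) n

lemma qW_pos {W : Finset ℕ} (hW : ∀ p ∈ W, p.Prime) : 0 < qW W :=
  Finset.prod_pos fun p hp => (hW p hp).pos

lemma chi_periodic (p : ℕ) (s : ℤ) : Function.Periodic (fun m => chi p (m + s)) (p : ℤ) := by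
  intro m
  have : (p : ℤ) ∣ m + p + s ↔ (p : ℤ) ∣ m + s := by
    rw [show m + p + s = (m + s) + p by ring]
    exact dvd_add_self_right
  simp only [chi, this]

lemma chi_neg (p : ℕ) (n : ℤ) : chi p (-n) = chi p n := by
  simp [chi]

lemma qW_dvd_iff {D : Finset ℕ} (hD : ∀ p ∈ D, p.Prime) (n : ℤ) :
    ((qW D : ℕ) : ℤ) ∣ n ↔ ∀ p ∈ D, (p : ℤ) ∣ n := by
  simp only [Int.natCast_dvd]
  constructor
  · intro h p hp
    exact (Finset.dvd_prod_of_mem _ hp).trans h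
  · intro h
    exact Finset.prod_primes_dvd _ (fun p hp => (hD p hp).prime) h

lemma cW_expand {W : Finset ℕ} (hW : ∀ p ∈ W, p.Prime) (n : ℤ) :
    cW W n = ∑ D ∈ W.powerset, (if ((qW D : ℕ) : ℤ) ∣ n then (qW D : ℝ) else 0) *
      (-1) ^ (W \ D).card := by
  unfold cW chi
  simp only [sub_eq_add_neg]
  rw [Finset.prod_add]
  apply Finset.sum_congr rfl
  intro D hD
  have hD' : ∀ p ∈ D, p.Prime := fun p hp => hW p (Finset.mem_powerset.1 hD hp)
  rw [Finset.prod_const]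
  congr 1
  split_ifs with h
  · rw [qW_dvd_iff hD'] at h
    unfold qW
    push_cast
    apply Finset.prod_congr rfl
    intro p hp
    simp [h p hp]
  · rw [qW_dvd_iff hD'] at h
    push Not at h
    obtain ⟨p, hp, hpn⟩ := h
    exact Finset.prod_eq_zero hp (by simp [hpn])

/-- averages with weight `cW` -/
noncomputable def av (W : Finset ℕ) (N : ℕ) (f : ℤ → ℝ) (x : ℤ) : ℝ :=
  (∑ n ∈ Finset.range N, cW W ((n : ℤ) + 1) * f (x + ((n : ℤ) + 1))) / N

lemma av_finite (W : Finset ℕ) (N : ℕ) (f : ℤ → ℝ) (hf : f.support.Finite) :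
    (av W N f).support.Finite := by
  have : (av W N f).support ⊆
      ⋃ j ∈ Finset.range N, Set.image (fun y => y - ((j : ℤ) + 1)) f.support := by
    intro x hx
    have hx' : (∑ n ∈ Finset.range N, cW W ((n : ℤ) + 1) * f (x + ((n : ℤ) + 1))) ≠ 0 := by
      intro h; apply hx; simp [av, h]
    obtain ⟨j, hj, hne⟩ := Finset.exists_ne_zero_of_sum_ne_zero hx'
    simp only [Set.mem_iUnion]
    exact ⟨j, hj, x + (j + 1), right_ne_zero_of_mul hne, by ring⟩
  refine Set.Finite.subset ?_ this
  exact Set.Finite.biUnion (Finset.finite_toSet _) fun j _ => hf.image _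

lemma sum_dvd (d N : ℕ) (hd : 0 < d) (g : ℤ → ℝ) (x : ℤ) :
    ∑ n ∈ Finset.range N, (if (d : ℤ) ∣ (n : ℤ) + 1 then g (x + ((n : ℤ) + 1)) else 0) =
      psum d g (N / d) x := by
  unfold psum
  rw [← Finset.sum_filter]
  symm
  apply Finset.sum_nbij (fun j => d * (j + 1) - 1)
  · intro j hj
    simp only [Finset.mem_range, Finset.mem_filter] at hj ⊢
    have h1 : d * (j + 1) ≤ N := by
      calc d * (j + 1) ≤ d * (N / d) := by gcongr; omega
        _ ≤ N := Nat.mul_div_le N d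
    have h2 : 0 < d * (j + 1) := by positivity
    refine ⟨by omega, ?_⟩
    have : ((d * (j + 1) - 1 : ℕ) : ℤ) + 1 = d * (j + 1) := by
      rw [Nat.cast_sub (by omega)]; push_cast; ring
    rw [this]
    exact dvd_mul_right _ _
  · intro i _ j _ hij
    have h1 : 0 < d * (i + 1) := by positivity
    have h2 : 0 < d * (j + 1) := by positivity
    have h3 : d * (i + 1) = d * (j + 1) := by dsimp at hij; omega
    have := Nat.eq_of_mul_eq_mul_left hd h3
    omega
  · intro n hn
    simp only [Finset.coe_filter, Finset.mem_range, Set.mem_ofPred_eq] at hn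
    obtain ⟨hn, hdv⟩ := hn
    have hdv' : d ∣ n + 1 := by exact_mod_cast hdv
    obtain ⟨k, hk⟩ := hdv'
    have hk0 : 0 < k := by
      rcases Nat.eq_zero_or_pos k with rfl | h
      · simp at hk
      · exact h
    refine ⟨k - 1, ?_, ?_⟩
    · simp only [Finset.coe_range, Set.mem_Iio]
      have : k ≤ N / d := by
        rw [Nat.le_div_iff_mul_le hd]
        rw [mul_comm]; omega
      omega
    · dsimp
      rw [show k - 1 + 1 = k by omega, ← hk]; omega
  · intro j hj
    have h2 : 0 < d * (j + 1) := by positivity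
    have : ((d * (j + 1) - 1 : ℕ) : ℤ) + 1 = d * (j + 1) := by
      rw [Nat.cast_sub (by omega)]; push_cast; ring
    rw [this, mul_comm]

lemma av_le_HL {W : Finset ℕ} (hW : ∀ p ∈ W, p.Prime) (N : ℕ) (f : ℤ → ℝ) (x : ℤ) :
    ‖av W N f x‖ₑ ≤ ∑ D ∈ W.powerset, HL (qW D) (fun y => |f y|) x := by
  have hD0 : ∀ D ∈ W.powerset, 0 < qW D := fun D hD =>
    qW_pos fun p hp => hW p (Finset.mem_powerset.1 hD hp)
  have h1 : |av W N f x| ≤ ∑ D ∈ W.powerset,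
      psum (qW D) (fun y => |f y|) (N / qW D) x / ((N / qW D : ℕ) : ℝ) := by
    unfold av
    rw [abs_div, Nat.abs_cast]
    calc |∑ n ∈ Finset.range N, cW W ((n : ℤ) + 1) * f (x + ((n : ℤ) + 1))| / (N : ℝ)
        ≤ (∑ n ∈ Finset.range N, ∑ D ∈ W.powerset,
          (qW D : ℝ) * (if ((qW D : ℕ) : ℤ) ∣ (n : ℤ) + 1 then |f (x + ((n : ℤ) + 1))| else 0)) / N := by
          gcongr
          refine (Finset.abs_sum_le_sum_abs _ _).trans ?_
          apply Finset.sum_le_sum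
          intro n _
          rw [cW_expand hW, abs_mul]
          refine (mul_le_mul_of_nonneg_right (Finset.abs_sum_le_sum_abs _ _) (abs_nonneg _)).trans ?_
          rw [Finset.sum_mul]
          apply Finset.sum_le_sum
          intro D _
          rw [abs_mul, abs_pow]
          split_ifs <;> simp
      _ = ∑ D ∈ W.powerset, (qW D : ℝ) / N * psum (qW D) (fun y => |f y|) (N / qW D) x := by
          rw [Finset.sum_comm, Finset.sum_div]
          apply Finset.sum_congr rfl
          intro D hD
          rw [← Finset.mul_sum, sum_dvd _ _ (hD0 D hD) (fun y => |f y|)]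
          ring
      _ ≤ _ := by
          apply Finset.sum_le_sum
          intro D hD
          have hp : 0 ≤ psum (qW D) (fun y => |f y|) (N / qW D) x :=
            psum_nonneg (fun _ => abs_nonneg _) _ _
          rcases Nat.eq_zero_or_pos (N / qW D) with h0 | h0
          · simp [h0, psum]
          · rw [div_mul_eq_mul_div, mul_comm, ← mul_div_assoc']
            rw [div_eq_mul_inv (psum _ _ _ _)]
            gcongr
            have hN : 0 < N := by
              rcases Nat.eq_zero_or_pos N with rfl | h
              · simp at h0
              · exact h
            rw [div_le_iff₀ (by exact_mod_cast hN), ← div_eq_inv_mul, le_div_iff₀ (by exact_mod_cast h0)]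
            exact_mod_cast Nat.mul_div_le N (qW D)
  rw [enorm_real]
  refine (ENNReal.ofReal_le_ofReal h1).trans ?_
  rw [ENNReal.ofReal_sum_of_nonneg]
  · apply Finset.sum_le_sum
    intro D _
    exact le_iSup (fun J : ℕ => ENNReal.ofReal (psum (qW D) (fun y => |f y|) J x / J)) (N / qW D)
  · intro D _
    exact div_nonneg (psum_nonneg (fun _ => abs_nonneg _) _ _) (Nat.cast_nonneg _)

/-- maximal inequality for fixed `W` -/
lemma av_max {W : Finset ℕ} (hW : ∀ p ∈ W, p.Prime) (f : ℤ → ℝ) (hf : f.support.Finite) :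
    nrm (fun x => ⨆ N : ℕ, ‖av W N f x‖ₑ) ≤ 2 ^ (W.card + 1) * rn f := by
  calc nrm (fun x => ⨆ N : ℕ, ‖av W N f x‖ₑ)
      ≤ nrm (fun x => ∑ D ∈ W.powerset, HL (qW D) (fun y => |f y|) x) :=
        nrm_mono fun x => iSup_le fun N => av_le_HL hW N f x
    _ ≤ ∑ D ∈ W.powerset, nrm (HL (qW D) (fun y => |f y|)) := nrm_sum_le _ _
    _ ≤ ∑ D ∈ W.powerset, 2 * rn f := by
        apply Finset.sum_le_sum
        intro D _
        have := HL_nrm (qW D) (fun y => |f y|) (fun _ => abs_nonneg _)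
          (hf.subset (by intro x hx; simpa using hx))
        simpa [rn] using this
    _ = _ := by
        rw [Finset.sum_const, Finset.card_powerset, nsmul_eq_mul]
        push_cast
        ring

lemma av_rn {W : Finset ℕ} (hW : ∀ p ∈ W, p.Prime) (N : ℕ) (f : ℤ → ℝ) (hf : f.support.Finite) :
    rn (av W N f) ≤ 2 ^ (W.card + 1) * rn f :=
  (nrm_mono fun x => le_iSup (fun N : ℕ => ‖av W N f x‖ₑ) N).trans (av_max hW f hf)

/-- Chinese remainder for sums -/
lemma crt_sum (a b : ℕ) (ha : 0 < a) (hb : 0 < b) (hab : a.Coprime b) (u v : ℤ → ℝ)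
    (hu : Function.Periodic u (a : ℤ)) (hv : Function.Periodic v (b : ℤ)) :
    ∑ m ∈ Finset.range (a * b), u m * v m =
      (∑ i ∈ Finset.range a, u i) * ∑ j ∈ Finset.range b, v j := by
  have hmod : ∀ (w : ℤ → ℝ) (c : ℕ), Function.Periodic w (c : ℤ) → ∀ m : ℕ,
      w ((m % c : ℕ) : ℤ) = w m := by
    intro w c hw m
    have := hw.int_mul ((m / c : ℕ) : ℤ) ((m % c : ℕ) : ℤ)
    rw [← this]
    congr 1
    have := Nat.mod_add_div m c
    push_cast
    have h2 : (m : ℤ) = (m % c : ℤ) + c * (m / c : ℤ) := by exact_mod_cast this.symm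
    linarith
  rw [Finset.sum_mul_sum, ← Finset.sum_product']
  have hinj : Set.InjOn (fun m : ℕ => (m % a, m % b)) (Finset.range (a * b) : Finset ℕ) := by
    intro m hm n hn h
    simp only [Prod.mk.injEq] at h
    have h3 : m ≡ n [MOD a * b] := (Nat.modEq_and_modEq_iff_modEq_mul hab).1 ⟨h.1, h.2⟩
    simp at hm hn
    exact Nat.ModEq.eq_of_lt_of_lt h3 hm hn
  have hmaps : Set.MapsTo (fun m : ℕ => (m % a, m % b)) (Finset.range (a * b) : Finset ℕ)
      (Finset.range a ×ˢ Finset.range b : Finset (ℕ × ℕ)) := by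
    intro m _
    simp [Nat.mod_lt _ ha, Nat.mod_lt _ hb]
  apply Finset.sum_nbij (fun m : ℕ => (m % a, m % b))
  · exact fun m hm => hmaps hm
  · exact hinj
  · exact Finset.surjOn_of_injOn_of_card_le _ hmaps hinj (by simp)
  · intro m _
    simp only [hmod u a hu m, hmod v b hv m]

lemma per_dvd {w : ℤ → ℝ} {a b : ℕ} (hw : Function.Periodic w (a : ℤ)) (h : a ∣ b) :
    Function.Periodic w (b : ℤ) := by
  obtain ⟨k, rfl⟩ := h
  have := hw.int_mul (k : ℤ)
  push_cast
  rw [mul_comm]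
  simpa using this

lemma prod_periodic (W : Finset ℕ) (h : ℕ → ℤ → ℝ)
    (hh : ∀ p ∈ W, Function.Periodic (h p) (p : ℤ)) :
    Function.Periodic (fun m => ∏ p ∈ W, h p m) ((qW W : ℕ) : ℤ) := by
  intro m
  apply Finset.prod_congr rfl
  intro p hp
  exact per_dvd (hh p hp) (Finset.dvd_prod_of_mem _ hp) m

lemma crt_prod (W : Finset ℕ) (hW : ∀ p ∈ W, p.Prime) (h : ℕ → ℤ → ℝ)
    (hh : ∀ p ∈ W, Function.Periodic (h p) (p : ℤ)) :
    ∑ m ∈ Finset.range (qW W), ∏ p ∈ W, h p m = ∏ p ∈ W, ∑ m ∈ Finset.range p, h p m := by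
  classical
  induction W using Finset.induction_on with
  | empty => simp [qW]
  | insert a s ha ih =>
    have hs : ∀ p ∈ s, p.Prime := fun p hp => hW p (Finset.mem_insert_of_mem hp)
    have haP : a.Prime := hW a (Finset.mem_insert_self _ _)
    have hq : qW (insert a s) = a * qW s := by simp [qW, Finset.prod_insert ha]
    rw [hq]
    simp only [Finset.prod_insert ha]
    rw [← ih hs (fun p hp => hh p (Finset.mem_insert_of_mem hp))]
    refine crt_sum a (qW s) haP.pos (qW_pos hs) ?_ (h a) (fun m => ∏ p ∈ s, h p m) ?_ ?_
    · apply Nat.Coprime.prod_right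
      intro p hp
      exact (Nat.coprime_primes haP (hs p hp)).2 (fun h => ha (h ▸ hp))
    · exact hh a (Finset.mem_insert_self _ _)
    · exact prod_periodic s h (fun p hp => hh p (Finset.mem_insert_of_mem hp))

lemma sum_mod_one (p : ℕ) (hp : 0 < p) (s : ℤ) (φ : ℤ → ℝ) (hφ : Function.Periodic φ (p : ℤ)) :
    ∑ m ∈ Finset.range p, (if (p : ℤ) ∣ (m : ℤ) + s then φ m else 0) = φ (-s) := by
  have hp' : (0 : ℤ) < p := by exact_mod_cast hp
  set r := ((-s) % p).toNat with hr
  have hr0 : ((r : ℕ) : ℤ) = (-s) % p := Int.toNat_of_nonneg (Int.emod_nonneg _ hp'.ne')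
  have hrp : r < p := by
    have := Int.emod_lt_of_pos (-s) hp'
    omega
  rw [Finset.sum_eq_single r]
  · have : (p : ℤ) ∣ (r : ℤ) + s := by
      rw [hr0, Int.emod_def]
      exact ⟨-(-s / p), by ring⟩
    rw [if_pos this, hr0, Int.emod_def]
    have := hφ.sub_zsmul_eq (-s / p) (x := -s)
    rw [← this]
    congr 1
    simp [mul_comm]
  · intro m hm hne
    rw [if_neg]
    intro hdv
    apply hne
    simp at hm
    have h2 : (p : ℤ) ∣ (r : ℤ) + s := by
      rw [hr0, Int.emod_def]
      exact ⟨-(-s / p), by ring⟩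
    have h3 : (p : ℤ) ∣ (m : ℤ) - r := by
      have := dvd_sub hdv h2
      simpa using this
    have h4 : (m : ℤ) - r = 0 := Int.eq_zero_of_abs_lt_dvd h3 (by rw [abs_lt]; omega)
    omega
  · intro h
    simp at h; omega

lemma chi_sum (p : ℕ) (hp : 0 < p) (s : ℤ) : ∑ m ∈ Finset.range p, chi p ((m : ℤ) + s) = 0 := by
  unfold chi
  rw [Finset.sum_sub_distrib, ← Finset.mul_sum, sum_mod_one p hp s (fun _ => 1) (fun _ => rfl)]
  simp

lemma chi_conv (p : ℕ) (hp : 0 < p) (s t : ℤ) :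
    ∑ m ∈ Finset.range p, chi p ((m : ℤ) + s) * chi p ((m : ℤ) + t) = p * chi p (t - s) := by
  have h1 : ∀ m : ℕ, chi p ((m : ℤ) + s) * chi p ((m : ℤ) + t) =
      p * (if (p : ℤ) ∣ (m : ℤ) + s then chi p ((m : ℤ) + t) else 0) - chi p ((m : ℤ) + t) := by
    intro m
    conv_lhs => rw [chi]
    split_ifs <;> ring
  simp_rw [h1]
  rw [Finset.sum_sub_distrib, ← Finset.mul_sum,
    sum_mod_one p hp s (fun m => chi p (m + t)) (chi_periodic p t), chi_sum p hp t]
  rw [show -s + t = t - s by ring]; ring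

/-- reproducing property -/
lemma cW_conv (W : Finset ℕ) (hW : ∀ p ∈ W, p.Prime) (s t : ℤ) :
    ∑ m ∈ Finset.range (qW W), cW W ((m : ℤ) + s) * cW W ((m : ℤ) + t) = qW W * cW W (t - s) := by
  unfold cW
  simp_rw [← Finset.prod_mul_distrib]
  rw [crt_prod W hW (fun p m => chi p (m + s) * chi p (m + t))
    (fun p _ => (chi_periodic p s).mul (chi_periodic p t))]
  rw [Finset.prod_congr rfl (fun p hp => chi_conv p (hW p hp).pos s t), Finset.prod_mul_distrib]
  simp [qW]

/-- orthogonality -/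
lemma cW_orth (W V : Finset ℕ) (hW : ∀ p ∈ W, p.Prime) (hV : ∀ p ∈ V, p.Prime) (hne : W ≠ V)
    (s t : ℤ) :
    ∑ m ∈ Finset.range (qW (W ∪ V)), cW W ((m : ℤ) + s) * cW V ((m : ℤ) + t) = 0 := by
  classical
  have hU : ∀ p ∈ W ∪ V, p.Prime := by
    intro p hp
    rcases Finset.mem_union.1 hp with h | h
    exacts [hW p h, hV p h]
  have e1 : ∀ m : ℤ, cW W (m + s) = ∏ p ∈ W ∪ V, (if p ∈ W then chi p (m + s) else 1) := by
    intro m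
    rw [Finset.prod_ite_mem]
    simp [cW]
  have e2 : ∀ m : ℤ, cW V (m + t) = ∏ p ∈ W ∪ V, (if p ∈ V then chi p (m + t) else 1) := by
    intro m
    rw [Finset.prod_ite_mem]
    simp [cW]
  simp_rw [e1, e2, ← Finset.prod_mul_distrib]
  rw [crt_prod (W ∪ V) hU (fun p m => (if p ∈ W then chi p (m + s) else 1) *
    (if p ∈ V then chi p (m + t) else 1))]
  · have : ∃ p, (p ∈ W ∧ p ∉ V) ∨ (p ∈ V ∧ p ∉ W) := by
      by_contra h
      push Not at h
      apply hne
      ext p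
      exact ⟨(h p).1, (h p).2⟩
    obtain ⟨p, ⟨h1, h2⟩ | ⟨h1, h2⟩⟩ := this
    · apply Finset.prod_eq_zero (i := p) (Finset.mem_union_left _ h1)
      simp only [h1, h2, if_true, if_false, mul_one]
      exact chi_sum p (hW p h1).pos s
    · apply Finset.prod_eq_zero (i := p) (Finset.mem_union_right _ h1)
      simp only [h1, h2, if_true, if_false, one_mul]
      exact chi_sum p (hV p h1).pos t
  · intro p _ m
    have := chi_periodic p s m
    have h2 := chi_periodic p t m
    dsimp at this h2 ⊢
    rw [this, h2]

lemma cW_periodic (W : Finset ℕ) (s : ℤ) :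
    Function.Periodic (fun m => cW W (m + s)) ((qW W : ℕ) : ℤ) :=
  prod_periodic W (fun p m => chi p (m + s)) (fun p _ => chi_periodic p s)

lemma cW_neg (W : Finset ℕ) (n : ℤ) : cW W (-n) = cW W n := by
  simp [cW, chi_neg]

lemma per_sum_shift (h : ℤ → ℝ) (q : ℕ) (hh : Function.Periodic h (q : ℤ)) (a : ℤ) :
    ∑ m ∈ Finset.range q, h (a + m) = ∑ m ∈ Finset.range q, h m := by
  have step : ∀ a : ℤ, ∑ m ∈ Finset.range q, h (a + 1 + m) = ∑ m ∈ Finset.range q, h (a + m) := by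
    intro a
    have h1 := Finset.sum_range_succ (fun m : ℕ => h (a + m)) q
    have h2 := Finset.sum_range_succ' (fun m : ℕ => h (a + m)) q
    have h3 : h (a + q) = h a := hh a
    simp only [Nat.cast_zero, add_zero, h3] at h1 h2
    have h4 : ∀ m : ℕ, h (a + 1 + m) = h (a + ((m + 1 : ℕ) : ℤ)) := by
      intro m; congr 1; push_cast; ring
    simp_rw [h4]
    linarith
  induction a using Int.induction_on with
  | zero => simp
  | succ i ih => rw [step]; exact ih
  | pred i ih => rw [← step, ← ih]; simp

lemma per_sum_mul (h : ℤ → ℝ) (q : ℕ) (hh : Function.Periodic h (q : ℤ)) (a : ℤ) (L : ℕ) :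
    ∑ m ∈ Finset.range (q * L), h (a + m) = L * ∑ m ∈ Finset.range q, h m := by
  induction L with
  | zero => simp
  | succ L ih =>
    rw [Nat.mul_succ, Finset.sum_range_add, ih]
    have := per_sum_shift h q hh (a + (q * L : ℕ))
    push_cast at this ⊢
    simp_rw [← add_assoc]
    rw [this]
    ring

lemma per_sum_bound (h : ℤ → ℝ) (q : ℕ) (hh : Function.Periodic h (q : ℤ)) (hq : 0 < q)
    (h0 : ∑ m ∈ Finset.range q, h m = 0) (B : ℝ) (hB : ∀ m, |h m| ≤ B) (a : ℤ) (n : ℕ) :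
    |∑ m ∈ Finset.range n, h (a + m)| ≤ q * B := by
  have hB0 : 0 ≤ B := (abs_nonneg _).trans (hB 0)
  rw [← Nat.div_add_mod n q, Finset.sum_range_add, per_sum_mul h q hh, h0, mul_zero, zero_add]
  refine (Finset.abs_sum_le_sum_abs _ _).trans ?_
  refine (Finset.sum_le_card_nsmul _ _ B (fun m _ => hB _)).trans ?_
  rw [Finset.card_range, nsmul_eq_mul]
  gcongr
  exact (Nat.mod_lt _ hq).le

lemma per_sum_bound_Ico (h : ℤ → ℝ) (q : ℕ) (hh : Function.Periodic h (q : ℤ)) (hq : 0 < q)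
    (h0 : ∑ m ∈ Finset.range q, h m = 0) (B : ℝ) (hB : ∀ m, |h m| ≤ B) (a b : ℤ) :
    |∑ m ∈ Finset.Ico a b, h m| ≤ q * B := by
  have : ∑ m ∈ Finset.Ico a b, h m = ∑ m ∈ Finset.range (b - a).toNat, h (a + m) := by
    rw [show Finset.Ico a b = (Finset.range (b - a).toNat).map
      (Nat.castEmbedding.trans <| addLeftEmbedding a) from rfl, Finset.sum_map]
    rfl
  rw [this]
  exact per_sum_bound h q hh hq h0 B hB a _

end PM

namespace PM
open scoped ENNReal
open MeasureTheory

lemma double_sum_bound (M M' : ℕ) (a b A : ℤ → ℝ) (B E : ℝ) (hB0 : 0 ≤ B)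
    (hB : ∀ j α β : ℤ, |∑ m ∈ Finset.Ico α β, a m * b (m + j)| ≤ B)
    (hA : ∀ j, |A j| ≤ E) :
    |∑ m ∈ Finset.Ico (0:ℤ) M, ∑ m' ∈ Finset.Ico (0:ℤ) M', a m * b m' * A (m' - m)| ≤
      (M + M') * (B * E) := by
  have h1 : ∑ m ∈ Finset.Ico (0:ℤ) M, ∑ m' ∈ Finset.Ico (0:ℤ) M', a m * b m' * A (m' - m) =
      ∑ j ∈ Finset.Ioo (-(M:ℤ)) M', A j *
        ∑ m ∈ Finset.Ico (max 0 (-j)) (min (M:ℤ) (M' - j)), a m * b (m + j) := by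
    calc _ = ∑ m ∈ Finset.Ico (0:ℤ) M, ∑ j ∈ Finset.Ioo (-(M:ℤ)) M',
          if 0 ≤ m + j ∧ m + j < M' then a m * b (m + j) * A j else 0 := by
          apply Finset.sum_congr rfl
          intro m hm
          rw [← Finset.sum_filter]
          simp only [Finset.mem_Ico] at hm
          apply Finset.sum_nbij' (fun m' => m' - m) (fun j => m + j)
          · intro m' hm'
            simp only [Finset.mem_Ico, Finset.mem_filter, Finset.mem_Ioo] at hm' ⊢
            omega
          · intro j hj
            simp only [Finset.mem_Ico, Finset.mem_filter, Finset.mem_Ioo] at hj ⊢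
            omega
          · intro m' _; ring
          · intro j _; ring
          · intro m' _
            rw [show m + (m' - m) = m' by ring]
      _ = _ := by
          rw [Finset.sum_comm]
          apply Finset.sum_congr rfl
          intro j _
          rw [← Finset.sum_filter, Finset.mul_sum]
          apply Finset.sum_congr
          · ext m
            simp only [Finset.mem_Ico, Finset.mem_filter]
            omega
          · intro m _; ring
  rw [h1]
  refine (Finset.abs_sum_le_sum_abs _ _).trans ?_
  have hE0 : 0 ≤ E := (abs_nonneg _).trans (hA 0)
  refine (Finset.sum_le_card_nsmul _ _ (B * E) ?_).trans ?_
  · intro j _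
    rw [abs_mul, mul_comm]
    exact mul_le_mul (hB _ _ _) (hA j) (abs_nonneg _) hB0
  · rw [Int.card_Ioo, nsmul_eq_mul]
    gcongr
    have : (((M' : ℤ) - -(M:ℤ) - 1).toNat : ℕ) ≤ M + M' := by omega
    exact_mod_cast this

lemma cW_sum_abs {W : Finset ℕ} (hW : ∀ p ∈ W, p.Prime) (M : ℕ) :
    ∑ n ∈ Finset.range M, |cW W ((n:ℤ) + 1)| ≤ 2 ^ W.card * M := by
  calc ∑ n ∈ Finset.range M, |cW W ((n:ℤ) + 1)|
      ≤ ∑ n ∈ Finset.range M, ∑ D ∈ W.powerset,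
          (qW D : ℝ) * (if ((qW D : ℕ) : ℤ) ∣ (n : ℤ) + 1 then 1 else 0) := by
        apply Finset.sum_le_sum
        intro n _
        rw [cW_expand hW]
        refine (Finset.abs_sum_le_sum_abs _ _).trans ?_
        apply Finset.sum_le_sum
        intro D _
        rw [abs_mul, abs_pow]
        split_ifs <;> simp
    _ = ∑ D ∈ W.powerset, (qW D : ℝ) * ((M / qW D : ℕ) : ℝ) := by
        rw [Finset.sum_comm]
        apply Finset.sum_congr rfl
        intro D hD
        have hD0 : 0 < qW D := qW_pos fun p hp => hW p (Finset.mem_powerset.1 hD hp)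
        rw [← Finset.mul_sum, sum_dvd _ _ hD0 (fun _ => 1) 0]
        simp [psum]
    _ ≤ ∑ D ∈ W.powerset, (M : ℝ) := by
        apply Finset.sum_le_sum
        intro D _
        exact_mod_cast Nat.mul_div_le M (qW D)
    _ = _ := by simp

open scoped InnerProductSpace in
lemma bessel_abs {H : Type*} [NormedAddCommGroup H] [InnerProductSpace ℝ H]
    (U : ℤ → H → H) (hUn : ∀ a x, ‖U a x‖ = ‖x‖)
    (hUi : ∀ a b x y, ⟪U a x, U b y⟫_ℝ = ⟪U (a - b) x, y⟫_ℝ)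
    (hU0 : ∀ x, U 0 x = x)
    (B : Finset (Finset ℕ)) (hB : ∀ W ∈ B, ∀ p ∈ W, p.Prime) (s : ℕ)
    (hq1 : ∀ W ∈ B, 2 ^ s ≤ qW W) (hq2 : ∀ W ∈ B, qW W ≤ 2 ^ (s + 1)) (hc : B.card ≤ 2 ^ s)
    (D : ℝ) (hD : ∀ W ∈ B, (2:ℝ) ^ W.card ≤ D) (v : H) :
    ∑ W ∈ B, ‖∑ n ∈ Finset.range (qW W * 2 ^ (4 * s)),
      (cW W ((n:ℤ) + 1) / ((qW W * 2 ^ (4 * s) : ℕ) : ℝ)) • U ((n:ℤ) + 1) v‖ ^ 2 ≤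
      (D ^ 2 + 32) * ‖v‖ ^ 2 := by
  classical
  set M : Finset ℕ → ℕ := fun W => qW W * 2 ^ (4 * s) with hM
  set k : Finset ℕ → ℤ → ℝ := fun W n => cW W (n + 1) / (M W : ℝ) with hk
  set h : Finset ℕ → H := fun W => ∑ n ∈ Finset.range (M W), k W n • U ((n:ℤ) + 1) v with hh
  have hM0 : ∀ W ∈ B, (0:ℝ) < M W := by
    intro W hW
    have : 0 < M W := Nat.mul_pos (qW_pos (hB W hW)) (by positivity)
    exact_mod_cast this
  change ∑ W ∈ B, ‖h W‖ ^ 2 ≤ (D ^ 2 + 32) * ‖v‖ ^ 2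
  -- adjoint
  set T' : Finset ℕ → H := fun W => ∑ n ∈ Finset.range (M W), k W n • U (-((n:ℤ) + 1)) (h W) with hT'
  set S := ∑ W ∈ B, ‖h W‖ ^ 2 with hS
  have hS0 : 0 ≤ S := Finset.sum_nonneg fun _ _ => by positivity
  have hadj : ∀ a x y, ⟪U a x, y⟫_ℝ = ⟪x, U (-a) y⟫_ℝ := by
    intro a x y
    have := hUi 0 (-a) x y
    rw [hU0] at this
    rw [this]; simp
  have e1 : S = ⟪∑ W ∈ B, T' W, v⟫_ℝ := by
    rw [sum_inner]
    apply Finset.sum_congr rfl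
    intro W _
    rw [← real_inner_self_eq_norm_sq]
    have hx : ∀ y, ⟪h W, y⟫_ℝ = ∑ n ∈ Finset.range (M W), k W n * ⟪v, U (-((n:ℤ) + 1)) y⟫_ℝ := by
      intro y
      rw [hh]
      dsimp only
      rw [sum_inner]
      apply Finset.sum_congr rfl
      intro n _
      rw [real_inner_smul_left, hadj]
    rw [hx (h W)]
    rw [hT']
    dsimp only
    rw [sum_inner]
    apply Finset.sum_congr rfl
    intro n _
    rw [real_inner_smul_left, real_inner_comm]
  set P : ℝ := 2 ^ s with hP
  have hP1 : 0 < P := by positivity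
  have hMP : ∀ W, (M W : ℝ) = qW W * P ^ 4 := by
    intro W; simp only [hM, hP]; push_cast; rw [← pow_mul]; ring_nf
  have hqP : ∀ W ∈ B, (qW W : ℝ) ≤ 2 * P := by
    intro W hW
    have := hq2 W hW
    have h2 : (qW W : ℝ) ≤ 2 ^ (s + 1) := by exact_mod_cast this
    rw [pow_succ] at h2; linarith
  have hq0 : ∀ W ∈ B, (0:ℝ) < qW W := fun W hW => by exact_mod_cast qW_pos (hB W hW)
  have hkabs : ∀ W ∈ B, ∀ n, |k W n| ≤ 1 / P ^ 4 := by
    intro W hW n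
    simp only [hk]
    rw [abs_div, abs_of_pos (hM0 W hW), hMP, div_le_div_iff₀ (by have := hq0 W hW; positivity) (by positivity)]
    nlinarith [cW_abs (hB W hW) (n + 1), pow_pos hP1 4]
  have hdiag : ∀ W ∈ B, ⟪T' W, T' W⟫_ℝ ≤ D ^ 2 * ‖h W‖ ^ 2 := by
    intro W hW
    rw [real_inner_self_eq_norm_sq, ← mul_pow]
    gcongr
    calc ‖T' W‖ ≤ ∑ n ∈ Finset.range (M W), |k W n| * ‖h W‖ := by
          refine (norm_sum_le _ _).trans (le_of_eq ?_)
          apply Finset.sum_congr rfl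
          intro n _
          rw [norm_smul, hUn, Real.norm_eq_abs]
      _ ≤ D * ‖h W‖ := by
          rw [← Finset.sum_mul]
          gcongr
          simp only [hk]
          simp_rw [abs_div, abs_of_pos (hM0 W hW)]
          rw [← Finset.sum_div, div_le_iff₀ (hM0 W hW)]
          refine (cW_sum_abs (hB W hW) _).trans ?_
          have := hD W hW
          have := hM0 W hW
          gcongr
  have hoff : ∀ W ∈ B, ∀ V ∈ B, W ≠ V → ⟪T' W, T' V⟫_ℝ ≤ 16 / P * (‖h W‖ * ‖h V‖) := by
    intro W hW V hV hne
    have e : ⟪T' W, T' V⟫_ℝ = ∑ m ∈ Finset.Ico (0:ℤ) (M W), ∑ m' ∈ Finset.Ico (0:ℤ) (M V),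
        k W m * k V m' * ⟪U (m' - m) (h W), h V⟫_ℝ := by
      have hr : ∀ (K : ℕ) (g : ℤ → ℝ), ∑ m ∈ Finset.Ico (0:ℤ) K, g m = ∑ m ∈ Finset.range K, g m := by
        intro K g
        rw [show Finset.Ico (0:ℤ) K = (Finset.range ((K:ℤ) - 0).toNat).map
          (Nat.castEmbedding.trans <| addLeftEmbedding 0) from rfl, Finset.sum_map]
        simp
      rw [hr]
      simp_rw [hr]
      rw [hT']
      dsimp only
      rw [sum_inner]
      apply Finset.sum_congr rfl
      intro m _
      rw [inner_sum]
      apply Finset.sum_congr rfl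
      intro m' _
      rw [real_inner_smul_left, real_inner_smul_right, hUi, mul_assoc]
      congr 3
      congr 1
      ring
    rw [e]
    refine (le_abs_self _).trans ?_
    have hU : ∀ p ∈ W ∪ V, p.Prime := by
      intro p hp
      rcases Finset.mem_union.1 hp with h | h
      · exact hB W hW p h
      · exact hB V hV p h
    have hquv : qW (W ∪ V) ≤ qW W * qW V := by
      have h1 : qW (W ∪ V) * qW (W ∩ V) = qW W * qW V := Finset.prod_union_inter
      have h2 : 0 < qW (W ∩ V) := qW_pos fun p hp => hB W hW p (Finset.mem_inter.1 hp).1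
      nlinarith
    refine (double_sum_bound (M W) (M V) (k W) (k V) (fun j => ⟪U j (h W), h V⟫_ℝ)
      (4 * P ^ 2 * (1 / P ^ 4 * (1 / P ^ 4))) (‖h W‖ * ‖h V‖) (by positivity) ?_ ?_).trans ?_
    · intro j α β
      refine (per_sum_bound_Ico (fun m => k W m * k V (m + j)) (qW (W ∪ V)) ?_ (qW_pos hU) ?_
        (1 / P ^ 4 * (1 / P ^ 4)) ?_ α β).trans ?_
      · intro m
        have hp : ∀ X : Finset ℕ, X ⊆ W ∪ V → ∀ s : ℤ, ∀ m : ℤ,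
            cW X (m + (qW (W ∪ V) : ℕ) + s) = cW X (m + s) := by
          intro X hX s m
          obtain ⟨c, hc⟩ : qW X ∣ qW (W ∪ V) := Finset.prod_dvd_prod_of_subset _ _ _ hX
          have := (cW_periodic X s).int_mul c m
          rw [hc]; push_cast
          rw [mul_comm ((qW X : ℤ))]
          exact_mod_cast this
        simp only [hk]
        rw [hp W Finset.subset_union_left 1 m]
        have := hp V Finset.subset_union_right (j + 1) m
        rw [show m + (qW (W ∪ V) : ℤ) + j + 1 = m + (qW (W ∪ V) : ℤ) + (j + 1) by ring, this]
        ring_nf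
      · have := cW_orth W V (hB W hW) (hB V hV) hne 1 (j + 1)
        simp only [hk]
        simp_rw [div_mul_div_comm]
        rw [← Finset.sum_div]
        simp_rw [← add_assoc] at this
        rw [this, zero_div]
      · intro m
        rw [abs_mul]
        exact mul_le_mul (hkabs W hW _) (hkabs V hV _) (abs_nonneg _) (by positivity)
      · gcongr
        have h1 : (qW (W ∪ V) : ℝ) ≤ qW W * qW V := by exact_mod_cast hquv
        have := hqP W hW
        have := hqP V hV
        have := hq0 W hW
        have := hq0 V hV
        nlinarith
    · intro j
      refine (abs_real_inner_le_norm _ _).trans ?_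
      rw [hUn]
    · rw [← mul_assoc]
      gcongr
      rw [hMP, hMP, ← add_mul]
      have := hqP W hW
      have := hqP V hV
      calc (qW W + qW V : ℝ) * P ^ 4 * (4 * P ^ 2 * (1 / P ^ 4 * (1 / P ^ 4)))
          ≤ (4 * P) * P ^ 4 * (4 * P ^ 2 * (1 / P ^ 4 * (1 / P ^ 4))) := by
            gcongr
            linarith
        _ = 16 / P := by field_simp; ring
  set w := ∑ W ∈ B, T' W with hw
  have hwn : ‖w‖ ^ 2 ≤ (D ^ 2 + 32) * S := by
    rw [← real_inner_self_eq_norm_sq, hw, sum_inner]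
    simp_rw [inner_sum]
    calc _ ≤ ∑ W ∈ B, ∑ V ∈ B, ((if W = V then D ^ 2 * ‖h W‖ ^ 2 else 0)
            + 16 / P * (‖h W‖ * ‖h V‖)) := by
          apply Finset.sum_le_sum
          intro W hW
          apply Finset.sum_le_sum
          intro V hV
          split_ifs with heq
          · subst heq
            have := hdiag W hW
            have : 0 ≤ 16 / P * (‖h W‖ * ‖h W‖) := by positivity
            linarith [hdiag W hW]
          · rw [zero_add]
            exact hoff W hW V hV heq
      _ = D ^ 2 * S + 16 / P * (∑ W ∈ B, ‖h W‖) ^ 2 := by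
          simp_rw [Finset.sum_add_distrib]
          congr 1
          · rw [hS, Finset.mul_sum]
            apply Finset.sum_congr rfl
            intro W hW
            rw [Finset.sum_ite_eq]
            simp [hW]
          · rw [sq, Finset.sum_mul_sum, Finset.mul_sum]
            simp_rw [Finset.mul_sum]
      _ ≤ D ^ 2 * S + 16 / P * (P * S) := by
          gcongr
          refine (sq_sum_le_card_mul_sum_sq).trans ?_
          rw [← hS]
          gcongr
          rw [hP]
          exact_mod_cast hc
      _ ≤ (D ^ 2 + 32) * S := by
          have : 16 / P * (P * S) = 16 * S := by field_simp
          rw [this]; nlinarith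
  have hSle : S ≤ ‖w‖ * ‖v‖ := by
    rw [e1]; exact real_inner_le_norm _ _
  have hsq : S * S ≤ ((D ^ 2 + 32) * ‖v‖ ^ 2) * S := by
    calc S * S ≤ (‖w‖ * ‖v‖) * (‖w‖ * ‖v‖) := mul_le_mul hSle hSle hS0 (by positivity)
      _ = ‖w‖ ^ 2 * ‖v‖ ^ 2 := by ring
      _ ≤ ((D ^ 2 + 32) * S) * ‖v‖ ^ 2 := by gcongr
      _ = _ := by ring
  rcases hS0.eq_or_lt with h0 | h0
  · rw [← h0]; positivity
  · exact le_of_mul_le_mul_right hsq h0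

/-- the shift on sequences -/
noncomputable def shiftLp (a : ℤ) (f : lp (fun _ : ℤ => ℝ) 2) : lp (fun _ : ℤ => ℝ) 2 :=
  ⟨fun x => f (x + a), by
    have h := (lp.memℓp f)
    apply memℓp_gen
    have h2 := h.summable (by norm_num)
    exact (Equiv.addRight a).summable_iff.2 h2⟩

lemma shiftLp_apply (a : ℤ) (f : lp (fun _ : ℤ => ℝ) 2) (x : ℤ) : shiftLp a f x = f (x + a) := rfl

lemma lp_norm_sq (f : lp (fun _ : ℤ => ℝ) 2) : ‖f‖ ^ 2 = ∑' x, f x ^ 2 := by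
  have := lp.norm_rpow_eq_tsum (p := 2) (by norm_num) f
  simpa using this

lemma bessel (B : Finset (Finset ℕ)) (hB : ∀ W ∈ B, ∀ p ∈ W, p.Prime) (s : ℕ)
    (hq1 : ∀ W ∈ B, 2 ^ s ≤ qW W) (hq2 : ∀ W ∈ B, qW W ≤ 2 ^ (s + 1)) (hc : B.card ≤ 2 ^ s)
    (D : ℝ) (hD : ∀ W ∈ B, (2:ℝ) ^ W.card ≤ D) (f : ℤ → ℝ) (hf : f.support.Finite) :
    ∑ W ∈ B, rn (av W (qW W * 2 ^ (4 * s)) f) ^ 2 ≤ ENNReal.ofReal (D ^ 2 + 32) * rn f ^ 2 := by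
  have hmem : Memℓp (E := fun _ : ℤ => ℝ) f 2 := by
    apply memℓp_gen
    apply summable_of_hasFiniteSupport
    refine hf.subset ?_
    intro x hx
    simp only [Function.mem_support] at hx ⊢
    intro h0
    simp [h0] at hx
  set v : lp (fun _ : ℤ => ℝ) 2 := ⟨f, hmem⟩ with hv
  have hvx : ∀ x, v x = f x := fun x => rfl
  have key := bessel_abs shiftLp (fun a x => by
      have h : ‖shiftLp a x‖ ^ 2 = ‖x‖ ^ 2 := by
        rw [lp_norm_sq, lp_norm_sq]
        exact (Equiv.addRight a).tsum_eq (fun y => x y ^ 2)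
      exact (pow_left_inj₀ (norm_nonneg _) (norm_nonneg _) (by norm_num)).1 h)
    (fun a b x y => by
      rw [lp.inner_eq_tsum, lp.inner_eq_tsum]
      simp only [shiftLp_apply]
      rw [← (Equiv.addRight b).tsum_eq (fun i => inner ℝ (x (i + (a - b))) (y i))]
      apply tsum_congr
      intro i
      simp only [Equiv.coe_addRight]
      rw [show i + b + (a - b) = i + a by ring])
    (fun x => by ext i; simp [shiftLp_apply]) B hB s hq1 hq2 hc D hD v
  have hav : ∀ W, ‖∑ n ∈ Finset.range (qW W * 2 ^ (4 * s)),
      (cW W ((n:ℤ) + 1) / ((qW W * 2 ^ (4 * s) : ℕ) : ℝ)) • shiftLp ((n:ℤ) + 1) v‖ ^ 2 =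
      ∑' x, (av W (qW W * 2 ^ (4 * s)) f x) ^ 2 := by
    intro W
    rw [lp_norm_sq]
    apply tsum_congr
    intro x
    congr 1
    rw [lp.coeFn_sum, Finset.sum_apply]
    unfold av
    rw [Finset.sum_div]
    apply Finset.sum_congr rfl
    intro n _
    rw [lp.coeFn_smul, Pi.smul_apply, shiftLp_apply, hvx, smul_eq_mul]
    ring
  simp_rw [hav] at key
  rw [lp_norm_sq] at key
  simp_rw [hvx] at key
  have h1 : ∀ W ∈ B, rn (av W (qW W * 2 ^ (4 * s)) f) ^ 2 =
      ENNReal.ofReal (∑' x, (av W (qW W * 2 ^ (4 * s)) f x) ^ 2) :=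
    fun W _ => rn_sq _ (av_finite W _ f hf)
  rw [Finset.sum_congr rfl h1, rn_sq f hf, ← ENNReal.ofReal_mul (by positivity),
    ← ENNReal.ofReal_sum_of_nonneg (fun W _ => tsum_nonneg fun x => sq_nonneg _)]
  exact ENNReal.ofReal_le_ofReal key

end PM

namespace PM
open scoped ENNReal
open MeasureTheory

lemma range_shift_diff (h : ℤ → ℝ) (N m : ℕ) :
    ∑ n ∈ Finset.range N, h ((n:ℤ) + m) - ∑ n ∈ Finset.range N, h n =
      ∑ i ∈ Finset.range m, h ((N:ℤ) + i) - ∑ i ∈ Finset.range m, h i := by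
  have h1 := Finset.sum_range_add (fun n : ℕ => h n) N m
  have h2 := Finset.sum_range_add (fun n : ℕ => h n) m N
  rw [add_comm m N, h1] at h2
  push_cast at h2
  simp_rw [add_comm (_ : ℤ) (m:ℤ)]
  linarith

lemma av_av_eq (W : Finset ℕ) (hW : ∀ p ∈ W, p.Prime) (N L : ℕ) (hN : 0 < N) (hL : 0 < L)
    (f : ℤ → ℝ) (x : ℤ) :
    av W N (av W (qW W * L) f) x - av W N f x =
      (∑ m ∈ Finset.range (qW W * L), cW W ((m:ℤ) + 1) *
        (∑ i ∈ Finset.range (m + 1), cW W ((N:ℤ) + i - m) * f (x + ((N:ℤ) + i + 1)) -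
          ∑ i ∈ Finset.range (m + 1), cW W ((i:ℤ) - m) * f (x + ((i:ℤ) + 1)))) /
        (N * (qW W * L : ℕ)) := by
  have hq := qW_pos hW
  have hM : 0 < qW W * L := Nat.mul_pos hq hL
  have hMr : (0:ℝ) < (qW W * L : ℕ) := by exact_mod_cast hM
  have hNr : (0:ℝ) < N := by exact_mod_cast hN
  have e1 : av W N (av W (qW W * L) f) x =
      (∑ m ∈ Finset.range (qW W * L), cW W ((m:ℤ) + 1) *
        ∑ n ∈ Finset.range N, cW W ((n:ℤ) + (m + 1 : ℕ) - m) * f (x + ((n:ℤ) + (m + 1 : ℕ) + 1))) /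
          (N * (qW W * L : ℕ)) := by
    unfold av
    rw [div_eq_div_iff hNr.ne' (by positivity)]
    rw [← mul_assoc, mul_comm (_ : ℝ) (N:ℝ), mul_comm (_ : ℝ) (N:ℝ), mul_assoc]
    congr 1
    rw [Finset.sum_mul]
    simp_rw [Finset.mul_sum]
    rw [Finset.sum_comm]
    apply Finset.sum_congr rfl
    intro n _
    rw [mul_assoc, div_mul_cancel₀ _ hMr.ne', Finset.mul_sum]
    apply Finset.sum_congr rfl
    intro m _
    push_cast
    rw [show (n:ℤ) + (m + 1) - m = n + 1 by ring,
      show x + (n + 1) + ((m:ℤ) + 1) = x + ((n:ℤ) + (m + 1) + 1) by ring]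
    ring
  have e2 : av W N f x = (∑ m ∈ Finset.range (qW W * L), cW W ((m:ℤ) + 1) *
        ∑ n ∈ Finset.range N, cW W ((n:ℤ) - m) * f (x + ((n:ℤ) + 1))) /
          (N * (qW W * L : ℕ)) := by
    unfold av
    rw [div_eq_div_iff hNr.ne' (by positivity)]
    rw [← mul_assoc, mul_comm (_ : ℝ) (N:ℝ), mul_comm (_ : ℝ) (N:ℝ), mul_assoc]
    congr 1
    simp_rw [Finset.mul_sum]
    rw [Finset.sum_comm, Finset.sum_mul]
    apply Finset.sum_congr rfl
    intro n _
    have hper : Function.Periodic (fun m : ℤ => cW W (m + 1) * cW W (m + (-n))) ((qW W : ℕ) : ℤ) :=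
      (cW_periodic W 1).mul (cW_periodic W (-n))
    have h1 := per_sum_mul _ _ hper 0 L
    simp only [zero_add] at h1
    rw [cW_conv W hW] at h1
    rw [show (-n - 1 : ℤ) = -(n + 1) by ring, cW_neg] at h1
    have h2 : ∀ m ∈ Finset.range (qW W * L), cW W ((m:ℤ) + 1) * (cW W ((n:ℤ) - m) * f (x + ((n:ℤ) + 1))) =
        (cW W ((m:ℤ) + 1) * cW W ((m:ℤ) + (-n))) * f (x + ((n:ℤ) + 1)) := by
      intro m _
      rw [← cW_neg W ((n:ℤ) - m)]
      rw [show -((n:ℤ) - m) = m + -n by ring]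
      ring
    rw [Finset.sum_congr rfl h2, ← Finset.sum_mul, h1]
    push_cast
    ring
  rw [e1, e2, ← sub_div, ← Finset.sum_sub_distrib]
  congr 1
  apply Finset.sum_congr rfl
  intro m _
  rw [← mul_sub]
  congr 1
  exact range_shift_diff (fun j => cW W (j - m) * f (x + (j + 1))) N (m + 1)

/-- error term -/
noncomputable def errF (W : Finset ℕ) (N M : ℕ) (f : ℤ → ℝ) (x : ℤ) : ℝ :=
  ∑ i ∈ Finset.range M, ((qW W : ℝ) ^ 2 / N) * f (x + ((N:ℤ) + i + 1)) +
    ∑ i ∈ Finset.range M, ((qW W : ℝ) ^ 2 / N) * f (x + ((i:ℤ) + 1))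

lemma av_av_err (W : Finset ℕ) (hW : ∀ p ∈ W, p.Prime) (N L : ℕ) (hN : 0 < N) (hL : 0 < L)
    (f : ℤ → ℝ) (hf : ∀ x, 0 ≤ f x) (x : ℤ) :
    |av W N (av W (qW W * L) f) x - av W N f x| ≤ errF W N (qW W * L) f x := by
  rw [av_av_eq W hW N L hN hL]
  have hq := qW_pos hW
  have hM : 0 < qW W * L := Nat.mul_pos hq hL
  set M := qW W * L with hMdef
  have hMr : (0:ℝ) < M := by exact_mod_cast hM
  have hNr : (0:ℝ) < N := by exact_mod_cast hN
  rw [abs_div, abs_of_pos (by positivity : (0:ℝ) < N * M), div_le_iff₀ (by positivity)]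
  set q : ℝ := (qW W : ℝ) with hqd
  have hq0 : (0:ℝ) < q := by rw [hqd]; exact_mod_cast hq
  set Y := ∑ i ∈ Finset.range M, f (x + ((N:ℤ) + i + 1)) + ∑ i ∈ Finset.range M, f (x + ((i:ℤ) + 1)) with hY
  have hE : errF W N M f x * (N * M) = M * (q ^ 2 * Y) := by
    unfold errF
    rw [← Finset.mul_sum, ← Finset.mul_sum, ← mul_add, ← hY, ← hqd]
    field_simp
  rw [hE]
  refine (Finset.abs_sum_le_sum_abs _ _).trans ?_
  refine (Finset.sum_le_card_nsmul _ _ (q ^ 2 * Y) ?_).trans ?_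
  · intro m hm
    have hm' : m + 1 ≤ M := Finset.mem_range.1 hm
    rw [abs_mul, sq, mul_assoc]
    have hb : ∀ g : ℕ → ℤ, ∀ a : ℕ → ℤ, |∑ i ∈ Finset.range (m + 1), cW W (g i) * f (x + a i)| ≤
        q * ∑ i ∈ Finset.range M, f (x + a i) := by
      intro g a
      refine (Finset.abs_sum_le_sum_abs _ _).trans ?_
      rw [Finset.mul_sum]
      refine (Finset.sum_le_sum (g := fun i => q * f (x + a i)) ?_).trans ?_
      · intro i _
        rw [abs_mul, abs_of_nonneg (hf _)]
        exact mul_le_mul_of_nonneg_right (cW_abs hW _) (hf _)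
      · apply Finset.sum_le_sum_of_subset_of_nonneg
        · exact Finset.range_mono hm'
        · intro i _ _
          exact mul_nonneg hq0.le (hf _)
    apply mul_le_mul (cW_abs hW _) _ (abs_nonneg _) hq0.le
    refine (abs_sub _ _).trans ?_
    rw [hY, mul_add]
    exact add_le_add (hb _ (fun i => (N:ℤ) + i + 1)) (hb _ (fun i => (i:ℤ) + 1))
  · rw [Finset.card_range, nsmul_eq_mul]

lemma errF_rn (W : Finset ℕ) (N M : ℕ) (f : ℤ → ℝ) :
    rn (errF W N M f) ≤ ENNReal.ofReal (2 * (qW W : ℝ) ^ 2 * M / N) * rn f := by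
  have h1 := rn_conv_le (Finset.range M) (fun _ => (qW W : ℝ) ^ 2 / N) (fun i => (N:ℤ) + i + 1) f
  have h2 := rn_conv_le (Finset.range M) (fun _ => (qW W : ℝ) ^ 2 / N) (fun i => (i:ℤ) + 1) f
  have hc : ∑ i ∈ Finset.range M, |(qW W : ℝ) ^ 2 / N| = (qW W : ℝ) ^ 2 * M / N := by
    rw [abs_of_nonneg (by positivity)]
    simp; ring
  rw [hc] at h1 h2
  calc rn (errF W N M f) ≤ _ := nrm_mono (fun x => by unfold errF; exact enorm_add_le _ _)
    _ ≤ _ := nrm_add_le _ _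
    _ ≤ _ := add_le_add h1 h2
    _ = _ := by
        rw [← add_mul, ← ENNReal.ofReal_add (by positivity) (by positivity)]
        congr 2; ring

lemma sum_sq_le_ennreal {ι : Type*} (B : Finset ι) (a : ι → ℝ≥0∞) (ha : ∀ i ∈ B, a i ≠ ⊤) :
    (∑ i ∈ B, a i) ^ 2 ≤ B.card * ∑ i ∈ B, a i ^ 2 := by
  have h : ∀ i ∈ B, a i = ((a i).toNNReal : ℝ≥0∞) := fun i hi => (ENNReal.coe_toNNReal (ha i hi)).symm
  have h' : ∀ i ∈ B, a i ^ 2 = (((a i).toNNReal ^ 2 : NNReal) : ℝ≥0∞) := fun i hi => by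
    rw [ENNReal.coe_pow, ← h i hi]
  rw [Finset.sum_congr rfl h, Finset.sum_congr rfl h']
  have := sq_sum_le_card_mul_sum_sq (s := B) (f := fun i => (a i).toNNReal)
  exact_mod_cast this

/-- the block bound -/
lemma block (B : Finset (Finset ℕ)) (hB : ∀ W ∈ B, ∀ p ∈ W, p.Prime) (s : ℕ)
    (hq1 : ∀ W ∈ B, 2 ^ s ≤ qW W) (hq2 : ∀ W ∈ B, qW W ≤ 2 ^ (s + 1)) (hc : B.card ≤ 2 ^ s)
    (D : ℝ) (hD1 : 1 ≤ D) (hD : ∀ W ∈ B, (2:ℝ) ^ W.card ≤ D) (f : ℤ → ℝ) (hf0 : ∀ x, 0 ≤ f x)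
    (hf : f.support.Finite) :
    nrm (fun x => ⨆ n : ℕ, ∑ W ∈ B, ENNReal.ofReal (4 ^ W.card / qW W) * ‖av W (2 ^ (9 * s + n)) f x‖ₑ) ≤
      ENNReal.ofReal (44 * D ^ 4 / Real.sqrt (2 ^ s)) * rn f := by
  set P : ℝ := 2 ^ s with hP
  have hP1 : 1 ≤ P := one_le_pow₀ (by norm_num)
  have hP0 : 0 < P := by positivity
  have hcP : (B.card : ℝ) ≤ P := by rw [hP]; exact_mod_cast hc
  set g : Finset ℕ → ℤ → ℝ := fun W => av W (qW W * 2 ^ (4 * s)) f with hg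
  have hq0 : ∀ W ∈ B, (0:ℝ) < qW W := fun W hW => by exact_mod_cast qW_pos (hB W hW)
  have hqP : ∀ W ∈ B, (qW W : ℝ) ≤ 2 * P := by
    intro W hW
    have := hq2 W hW
    have h2 : (qW W : ℝ) ≤ 2 ^ (s + 1) := by exact_mod_cast this
    rw [pow_succ] at h2; linarith
  have hqP1 : ∀ W ∈ B, P ≤ (qW W : ℝ) := by
    intro W hW
    have := hq1 W hW
    rw [hP]; exact_mod_cast this
  have ha : ∀ W ∈ B, (4:ℝ) ^ W.card / qW W ≤ D ^ 2 / P := by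
    intro W hW
    have h4 : (4:ℝ) ^ W.card ≤ D ^ 2 := by
      rw [show (4:ℝ) = 2 ^ 2 by norm_num, ← pow_mul, mul_comm, pow_mul]
      gcongr
      exact hD W hW
    gcongr
    exact hqP1 W hW
  -- pointwise
  have hpt : ∀ x, (⨆ n : ℕ, ∑ W ∈ B, ENNReal.ofReal (4 ^ W.card / qW W) * ‖av W (2 ^ (9 * s + n)) f x‖ₑ) ≤
      ∑ W ∈ B, ENNReal.ofReal (D ^ 2 / P) * (⨆ N, ‖av W N (g W) x‖ₑ) +
      ∑ W ∈ B, ENNReal.ofReal (D ^ 2 / P) *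
        ∑' n : ℕ, ‖errF W (2 ^ (9 * s + n)) (qW W * 2 ^ (4 * s)) f x‖ₑ := by
    intro x
    apply iSup_le
    intro n
    rw [← Finset.sum_add_distrib]
    apply Finset.sum_le_sum
    intro W hW
    rw [← mul_add]
    apply mul_le_mul' (ENNReal.ofReal_le_ofReal (ha W hW))
    have h1 := av_av_err W (hB W hW) (2 ^ (9 * s + n)) (2 ^ (4 * s)) (by positivity) (by positivity) f hf0 x
    have h2 : ‖av W (2 ^ (9 * s + n)) f x‖ₑ ≤ ‖av W (2 ^ (9 * s + n)) (g W) x‖ₑ +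
        ‖errF W (2 ^ (9 * s + n)) (qW W * 2 ^ (4 * s)) f x‖ₑ := by
      rw [enorm_real, enorm_real, enorm_real, ← ENNReal.ofReal_add (abs_nonneg _) (abs_nonneg _)]
      apply ENNReal.ofReal_le_ofReal
      rw [abs_sub_comm] at h1
      have h3 := abs_sub_abs_le_abs_sub (av W (2 ^ (9 * s + n)) f x) (av W (2 ^ (9 * s + n)) (g W) x)
      have h4 := le_abs_self (errF W (2 ^ (9 * s + n)) (qW W * 2 ^ (4 * s)) f x)
      simp only [hg] at h3 ⊢
      linarith
    refine h2.trans (add_le_add ?_ ?_)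
    · exact le_iSup (fun N => ‖av W N (g W) x‖ₑ) _
    · exact ENNReal.le_tsum n
  refine (nrm_mono hpt).trans ((nrm_add_le _ _).trans ?_)
  have b1 : nrm (fun x => ∑ W ∈ B, ENNReal.ofReal (D ^ 2 / P) * (⨆ N, ‖av W N (g W) x‖ₑ)) ≤
      ENNReal.ofReal (12 * D ^ 4 / Real.sqrt P) * rn f := by
    refine (nrm_sum_le _ _).trans ?_
    have hs : ∑ W ∈ B, rn (g W) ≤ ENNReal.ofReal (6 * D * Real.sqrt P) * rn f := by
      apply (ENNReal.pow_le_pow_left_iff (n := 2) (by norm_num)).1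
      refine (sum_sq_le_ennreal B _ (fun W _ => rn_ne_top _ (av_finite _ _ _ hf))).trans ?_
      have hb := bessel B hB s hq1 hq2 hc D hD f hf
      rw [mul_pow, ← ENNReal.ofReal_pow (by positivity)]
      refine (mul_le_mul' (le_refl _) hb).trans ?_
      rw [← mul_assoc]
      gcongr
      rw [show (B.card : ℝ≥0∞) = ENNReal.ofReal (B.card : ℝ) by simp, ← ENNReal.ofReal_mul (by positivity)]
      apply ENNReal.ofReal_le_ofReal
      rw [mul_pow, Real.sq_sqrt hP0.le, mul_comm]
      apply mul_le_mul _ hcP (by positivity) (by positivity)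
      nlinarith
    calc ∑ W ∈ B, nrm (fun x => ENNReal.ofReal (D ^ 2 / P) * (⨆ N, ‖av W N (g W) x‖ₑ))
        ≤ ∑ W ∈ B, ENNReal.ofReal (D ^ 2 / P) * (ENNReal.ofReal (2 * D) * rn (g W)) := by
          apply Finset.sum_le_sum
          intro W hW
          rw [nrm_const_mul]
          gcongr
          refine (av_max (hB W hW) (g W) (av_finite _ _ _ hf)).trans ?_
          gcongr
          rw [show (2:ℝ≥0∞) ^ (W.card + 1) = ENNReal.ofReal (2 ^ (W.card + 1)) by
            rw [ENNReal.ofReal_pow (by norm_num)]; norm_num]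
          apply ENNReal.ofReal_le_ofReal
          rw [pow_succ]; linarith [hD W hW]
      _ = ENNReal.ofReal (2 * D ^ 3 / P) * ∑ W ∈ B, rn (g W) := by
          rw [Finset.mul_sum]
          apply Finset.sum_congr rfl
          intro W _
          rw [← mul_assoc, ← ENNReal.ofReal_mul (by positivity)]
          congr 2; ring
      _ ≤ ENNReal.ofReal (2 * D ^ 3 / P) * (ENNReal.ofReal (6 * D * Real.sqrt P) * rn f) := by gcongr
      _ = _ := by
          rw [← mul_assoc, ← ENNReal.ofReal_mul (by positivity)]
          congr 2
          have h1 := Real.mul_self_sqrt hP0.le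
          have h2 := Real.sqrt_pos.2 hP0
          field_simp
          rw [sq, h1]; ring
  have b2 : nrm (fun x => ∑ W ∈ B, ENNReal.ofReal (D ^ 2 / P) *
        ∑' n : ℕ, ‖errF W (2 ^ (9 * s + n)) (qW W * 2 ^ (4 * s)) f x‖ₑ) ≤
      ENNReal.ofReal (32 * D ^ 4 / Real.sqrt P) * rn f := by
    refine (nrm_sum_le _ _).trans ?_
    have hW1 : ∀ W ∈ B, nrm (fun x => ∑' n : ℕ, ‖errF W (2 ^ (9 * s + n)) (qW W * 2 ^ (4 * s)) f x‖ₑ) ≤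
        ENNReal.ofReal (32 / P ^ 2) * rn f := by
      intro W hW
      refine (nrm_tsum_le _).trans ?_
      calc _ ≤ ∑' n : ℕ, ENNReal.ofReal (16 / P ^ 2 * (1 / 2) ^ n) * rn f := by
            apply ENNReal.tsum_le_tsum
            intro n
            refine (errF_rn W _ _ f).trans ?_
            gcongr
            push_cast
            have e1 : (2:ℝ) ^ (4 * s) = P ^ 4 := by rw [hP, ← pow_mul]; ring_nf
            have e2 : (2:ℝ) ^ (9 * s + n) = P ^ 9 * 2 ^ n := by rw [hP, ← pow_mul, pow_add]; ring_nf
            rw [e1, e2]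
            have := hqP W hW
            have := hq0 W hW
            calc 2 * (qW W : ℝ) ^ 2 * (qW W * P ^ 4) / (P ^ 9 * 2 ^ n)
                ≤ 2 * (2 * P) ^ 2 * (2 * P * P ^ 4) / (P ^ 9 * 2 ^ n) := by gcongr
              _ = _ := by rw [one_div, inv_pow]; field_simp; ring
        _ = _ := by
            rw [ENNReal.tsum_mul_right]
            congr 1
            rw [← ENNReal.ofReal_tsum_of_nonneg (fun n => by positivity)
              ((summable_geometric_two).mul_left _), tsum_mul_left, tsum_geometric_two]
            congr 1; ring
    calc _ ≤ ∑ W ∈ B, ENNReal.ofReal (D ^ 2 / P) * (ENNReal.ofReal (32 / P ^ 2) * rn f) := by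
          apply Finset.sum_le_sum
          intro W hW
          rw [nrm_const_mul]
          gcongr
          exact hW1 W hW
      _ = ENNReal.ofReal (B.card * (D ^ 2 / P * (32 / P ^ 2))) * rn f := by
          rw [Finset.sum_const, nsmul_eq_mul, ENNReal.ofReal_mul (by positivity),
            ENNReal.ofReal_mul (by positivity), ENNReal.ofReal_natCast]
          ring
      _ ≤ _ := by
          gcongr
          have hsq : Real.sqrt P ≤ P ^ 2 := by
            rw [Real.sqrt_le_left (by positivity)]
            calc P ≤ P ^ 4 := le_self_pow₀ hP1 (by norm_num)
              _ = _ := by ring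
          have hsp := Real.sqrt_pos.2 hP0
          calc (B.card:ℝ) * (D ^ 2 / P * (32 / P ^ 2)) ≤ P * (D ^ 2 / P * (32 / P ^ 2)) := by gcongr
            _ = 32 * D ^ 2 / P ^ 2 := by field_simp
            _ ≤ 32 * D ^ 4 / Real.sqrt P := by
              gcongr
              · norm_num
  refine (add_le_add b1 b2).trans (le_of_eq ?_)
  rw [← add_mul, ← ENNReal.ofReal_add (by positivity) (by positivity)]
  congr 2
  ring

end PM

namespace PM
open scoped ENNReal
open MeasureTheory

lemma chi_sq (p : ℕ) (n : ℤ) : chi p n * chi p n = ((p:ℝ) - 2) * chi p n + ((p:ℝ) - 1) := by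
  unfold chi; split_ifs <;> ring

lemma qW_union {U V : Finset ℕ} (h : Disjoint U V) : qW (U ∪ V) = qW U * qW V :=
  Finset.prod_union h

lemma cW_union {U V : Finset ℕ} (h : Disjoint U V) (n : ℤ) : cW (U ∪ V) n = cW U n * cW V n :=
  Finset.prod_union h

/-- set produced by the product formula -/
def WW (t : Finset ℕ × Finset ℕ × Finset ℕ) : Finset ℕ := (t.1 \ t.2.1 ∪ t.2.1 \ t.1) ∪ t.2.2

/-- coefficient in the product formula -/
noncomputable def cf (t : Finset ℕ × Finset ℕ × Finset ℕ) : ℝ :=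
  (∏ p ∈ t.2.2, ((p:ℝ) - 2)) * ∏ p ∈ (t.1 ∩ t.2.1) \ t.2.2, ((p:ℝ) - 1)

lemma cW_prod (U V : Finset ℕ) (n : ℤ) :
    cW U n * cW V n = ∑ H ∈ (U ∩ V).powerset, cf (U, V, H) * cW (WW (U, V, H)) n := by
  have hU : cW U n = cW (U \ V) n * cW (U ∩ V) n := by
    rw [← cW_union (Finset.disjoint_sdiff_inter U V), Finset.sdiff_union_inter]
  have hV : cW V n = cW (V \ U) n * cW (U ∩ V) n := by
    rw [Finset.inter_comm, ← cW_union (Finset.disjoint_sdiff_inter V U), Finset.sdiff_union_inter]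
  have hI : cW (U ∩ V) n * cW (U ∩ V) n = ∑ H ∈ (U ∩ V).powerset, cf (U, V, H) * cW H n := by
    unfold cW
    rw [← Finset.prod_mul_distrib]
    simp_rw [chi_sq]
    rw [Finset.prod_add]
    apply Finset.sum_congr rfl
    intro H _
    rw [Finset.prod_mul_distrib]
    unfold cf
    ring
  rw [hU, hV, show cW (U \ V) n * cW (U ∩ V) n * (cW (V \ U) n * cW (U ∩ V) n) =
    cW (U \ V) n * cW (V \ U) n * (cW (U ∩ V) n * cW (U ∩ V) n) by ring, hI, Finset.mul_sum]
  apply Finset.sum_congr rfl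
  intro H hH
  have hH' := Finset.mem_powerset.1 hH
  have hd : Disjoint (U \ V ∪ V \ U) H := by
    rw [Finset.disjoint_left]
    intro a ha haH
    have := hH' haH
    simp only [Finset.mem_union, Finset.mem_sdiff, Finset.mem_inter] at ha this
    tauto
  have hd2 : Disjoint (U \ V) (V \ U) := by
    rw [Finset.disjoint_left]
    intro a ha hb
    simp only [Finset.mem_sdiff] at ha hb
    tauto
  unfold WW
  rw [cW_union hd, cW_union hd2]
  ring

lemma cf_abs {U V H : Finset ℕ} (hU : ∀ p ∈ U, p.Prime) (hV : ∀ p ∈ V, p.Prime)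
    (hH : H ⊆ U ∩ V) :
    |cf (U, V, H)| / (qW U * qW V) ≤ 1 / (qW (WW (U, V, H)) * qW ((U ∩ V) \ H)) := by
  have hI : ∀ p ∈ U ∩ V, p.Prime := fun p hp => hU p (Finset.mem_inter.1 hp).1
  have h1 : |cf (U, V, H)| ≤ qW H * qW ((U ∩ V) \ H) := by
    unfold cf qW
    rw [abs_mul, Finset.abs_prod, Finset.abs_prod]
    push_cast
    apply mul_le_mul
    · apply Finset.prod_le_prod (fun _ _ => abs_nonneg _)
      intro p hp
      have : (2:ℝ) ≤ p := by exact_mod_cast (hI p (hH hp)).two_le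
      rw [abs_of_nonneg (by linarith)]; linarith
    · apply Finset.prod_le_prod (fun _ _ => abs_nonneg _)
      intro p hp
      have : (2:ℝ) ≤ p := by exact_mod_cast (hI p (Finset.mem_sdiff.1 hp).1).two_le
      rw [abs_of_nonneg (by linarith)]; linarith
    · exact Finset.prod_nonneg fun _ _ => abs_nonneg _
    · exact Finset.prod_nonneg fun _ _ => by positivity
  have hd : Disjoint (U \ V ∪ V \ U) H := by
    rw [Finset.disjoint_left]
    intro a ha haH
    have := hH haH
    simp only [Finset.mem_union, Finset.mem_sdiff, Finset.mem_inter] at ha this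
    tauto
  have hd2 : Disjoint (U \ V) (V \ U) := by
    rw [Finset.disjoint_left]
    intro a ha hb
    simp only [Finset.mem_sdiff] at ha hb
    tauto
  have e1 : qW (WW (U, V, H)) = qW (U \ V) * qW (V \ U) * qW H := by
    unfold WW; rw [qW_union hd, qW_union hd2]
  have e2 : qW U = qW (U \ V) * qW (U ∩ V) := by
    rw [← qW_union (Finset.disjoint_sdiff_inter U V), Finset.sdiff_union_inter]
  have e3 : qW V = qW (V \ U) * qW (U ∩ V) := by
    rw [Finset.inter_comm, ← qW_union (Finset.disjoint_sdiff_inter V U), Finset.sdiff_union_inter]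
  have e4 : qW (U ∩ V) = qW H * qW ((U ∩ V) \ H) := by
    rw [← qW_union Finset.disjoint_sdiff, Finset.union_sdiff_of_subset hH]
  have p1 : (0:ℝ) < qW (U \ V) := by
    exact_mod_cast qW_pos fun p hp => hU p (Finset.mem_sdiff.1 hp).1
  have p2 : (0:ℝ) < qW (V \ U) := by
    exact_mod_cast qW_pos fun p hp => hV p (Finset.mem_sdiff.1 hp).1
  have p3 : (0:ℝ) < qW H := by exact_mod_cast qW_pos fun p hp => hI p (hH hp)
  have p4 : (0:ℝ) < qW ((U ∩ V) \ H) := by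
    exact_mod_cast qW_pos fun p hp => hI p (Finset.mem_sdiff.1 hp).1
  rw [e1, e2, e3, e4]
  push_cast
  rw [div_le_div_iff₀ (by positivity) (by positivity)]
  have p5 : (0:ℝ) < qW (U \ V) * qW (V \ U) * qW H * qW ((U ∩ V) \ H) := by positivity
  calc |cf (U, V, H)| * (qW (U \ V) * qW (V \ U) * qW H * qW ((U ∩ V) \ H))
      ≤ (qW H * qW ((U ∩ V) \ H)) * (qW (U \ V) * qW (V \ U) * qW H * qW ((U ∩ V) \ H)) := by
        gcongr
    _ = _ := by ring

/-- admissible sets -/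
def UU (P : Finset ℕ) (R : ℕ) : Finset (Finset ℕ) := P.powerset.filter (fun U => qW U ≤ R)

/-- normalisation -/
noncomputable def GG (P : Finset ℕ) (R : ℕ) : ℝ := ∑ U ∈ UU P R, (1 : ℝ) / qW U

/-- sieve weight -/
noncomputable def SS (P : Finset ℕ) (R : ℕ) (n : ℤ) : ℝ :=
  ∑ U ∈ UU P R, (-1) ^ U.card * (1 / (qW U : ℝ)) * cW U n

/-- index set of the triple sum -/
def TT (P : Finset ℕ) (R : ℕ) : Finset (Finset ℕ × Finset ℕ × Finset ℕ) :=
  (UU P R ×ˢ UU P R ×ˢ P.powerset).filter (fun t => t.2.2 ⊆ t.1 ∩ t.2.1)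

lemma SS_sq (P : Finset ℕ) (R : ℕ) (n : ℤ) :
    SS P R n ^ 2 = ∑ t ∈ TT P R, ((-1) ^ t.1.card * (-1) ^ t.2.1.card *
      (cf t / (qW t.1 * qW t.2.1))) * cW (WW t) n := by
  unfold TT
  rw [Finset.sum_filter, Finset.sum_product]
  simp_rw [Finset.sum_product]
  unfold SS
  rw [sq, Finset.sum_mul_sum]
  apply Finset.sum_congr rfl
  intro U hU
  apply Finset.sum_congr rfl
  intro V _
  rw [← Finset.sum_filter]
  have hs : (P.powerset.filter (fun H => H ⊆ U ∩ V)) = (U ∩ V).powerset := by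
    ext H
    simp only [Finset.mem_filter, Finset.mem_powerset]
    constructor
    · exact fun h => h.2
    · intro h
      refine ⟨?_, h⟩
      have : U ⊆ P := Finset.mem_powerset.1 (Finset.mem_filter.1 hU).1
      exact (h.trans Finset.inter_subset_left).trans this
  rw [hs, show (-1) ^ U.card * (1 / (qW U : ℝ)) * cW U n * ((-1) ^ V.card * (1 / (qW V : ℝ)) * cW V n) =
    ((-1) ^ U.card * (1 / (qW U : ℝ)) * ((-1) ^ V.card * (1 / (qW V : ℝ)))) * (cW U n * cW V n) by ring,
    cW_prod, Finset.mul_sum]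
  apply Finset.sum_congr rfl
  intro H _
  rw [div_eq_mul_inv (cf _), mul_inv, one_div, one_div]
  ring

lemma prop_aux (u v h u' v' : Prop)
    (b1 : ((u ∧ ¬v) ∨ (v ∧ ¬u)) ∨ h ↔ ((u' ∧ ¬v') ∨ (v' ∧ ¬u')) ∨ h)
    (b2 : (u ∧ v) ∧ ¬h ↔ (u' ∧ v') ∧ ¬h) (b3 : u ∧ ¬v ↔ u' ∧ ¬v')
    (b4 : h → u ∧ v) (b5 : h → u' ∧ v') : (u ↔ u') ∧ (v ↔ v') := by
  by_cases u <;> by_cases v <;> by_cases h <;> by_cases u' <;> by_cases v' <;> simp_all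

lemma sieve_avg (P : Finset ℕ) (hP : ∀ p ∈ P, p.Prime) (R N : ℕ) (f : ℤ → ℝ) (x : ℤ) :
    (∑ n ∈ Finset.range N, SS P R ((n:ℤ) + 1) ^ 2 * f (x + ((n:ℤ) + 1))) / N ≤
      GG P R * ∑ W ∈ UU P (R ^ 2), 4 ^ W.card / (qW W : ℝ) * |av W N f x| := by
  have hUP : ∀ {S : ℕ} {U}, U ∈ UU P S → U ⊆ P ∧ qW U ≤ S := by
    intro S U hU
    have := Finset.mem_filter.1 hU
    exact ⟨Finset.mem_powerset.1 this.1, this.2⟩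
  have e1 : (∑ n ∈ Finset.range N, SS P R ((n:ℤ) + 1) ^ 2 * f (x + ((n:ℤ) + 1))) / N =
      ∑ t ∈ TT P R, ((-1) ^ t.1.card * (-1) ^ t.2.1.card *
      (cf t / (qW t.1 * qW t.2.1))) * av (WW t) N f x := by
    simp_rw [SS_sq, Finset.sum_mul]
    rw [Finset.sum_comm, Finset.sum_div]
    apply Finset.sum_congr rfl
    intro t _
    unfold av
    rw [← mul_div_assoc (c := (N:ℝ)), Finset.mul_sum]
    congr 1
    apply Finset.sum_congr rfl
    intro n _
    ring
  rw [e1]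
  have hmemT : ∀ t ∈ TT P R, t.1 ⊆ P ∧ qW t.1 ≤ R ∧ t.2.1 ⊆ P ∧ qW t.2.1 ≤ R ∧ t.2.2 ⊆ t.1 ∩ t.2.1 := by
    intro t ht
    unfold TT at ht
    rw [Finset.mem_filter, Finset.mem_product, Finset.mem_product] at ht
    exact ⟨(hUP ht.1.1).1, (hUP ht.1.1).2, (hUP ht.1.2.1).1, (hUP ht.1.2.1).2, ht.2⟩
  let φ : Finset ℕ × Finset ℕ × Finset ℕ → Finset ℕ × Finset ℕ × Finset ℕ × Finset ℕ :=
    fun t => (WW t, (t.1 ∩ t.2.1) \ t.2.2, t.1 \ t.2.1, t.2.2)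
  let g : Finset ℕ × Finset ℕ × Finset ℕ × Finset ℕ → ℝ :=
    fun u => 1 / ((qW u.1 : ℝ) * qW u.2.1) * |av u.1 N f x|
  have hg0 : ∀ u, 0 ≤ g u := fun u => by positivity
  let big : Finset (Finset ℕ × Finset ℕ × Finset ℕ × Finset ℕ) :=
    (UU P (R ^ 2) ×ˢ UU P R ×ˢ P.powerset ×ˢ P.powerset).filter
      (fun u => u.2.2.1 ⊆ u.1 ∧ u.2.2.2 ⊆ u.1)
  have hinj : Set.InjOn φ (TT P R : Set (Finset ℕ × Finset ℕ × Finset ℕ)) := by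
    rintro ⟨U, V, H⟩ ht ⟨U', V', H'⟩ ht' heq
    have h1 := hmemT _ ht
    have h2 := hmemT _ ht'
    simp only [φ, WW, Prod.mk.injEq] at heq h1 h2
    obtain ⟨a1, a2, a3, a4⟩ := heq
    subst a4
    have hH1 := h1.2.2.2.2
    have hH2 := h2.2.2.2.2
    have key : ∀ a, (a ∈ U ↔ a ∈ U') ∧ (a ∈ V ↔ a ∈ V') := by
      intro a
      have b1 := Finset.ext_iff.1 a1 a
      have b2 := Finset.ext_iff.1 a2 a
      have b3 := Finset.ext_iff.1 a3 a
      have b4 := @hH1 a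
      have b5 := @hH2 a
      simp only [Finset.mem_union, Finset.mem_sdiff, Finset.mem_inter] at b1 b2 b3 b4 b5
      exact prop_aux _ _ _ _ _ b1 b2 b3 b4 b5
    have hUU : U = U' := Finset.ext fun a => (key a).1
    have hVV : V = V' := Finset.ext fun a => (key a).2
    rw [hUU, hVV]
  have hqmono : ∀ {A B : Finset ℕ}, A ⊆ B → B ⊆ P → qW A ≤ qW B := by
    intro A B hAB hB
    apply Finset.prod_le_prod_of_subset_of_one_le' hAB
    intro p hp _
    exact (hP p (hB hp)).one_le
  have hmaps : ∀ t ∈ TT P R, φ t ∈ big := by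
    rintro ⟨U, V, H⟩ ht
    have h1 := hmemT _ ht
    simp only at h1
    obtain ⟨hU, hqU, hV, hqV, hH⟩ := h1
    have hWUV : WW (U, V, H) ⊆ U ∪ V := by
      intro a ha
      have := @hH a
      simp only [WW, Finset.mem_union, Finset.mem_sdiff, Finset.mem_inter] at ha this ⊢
      tauto
    have hUVP : U ∪ V ⊆ P := Finset.union_subset hU hV
    have hIP : U ∩ V ⊆ P := Finset.inter_subset_left.trans hU
    simp only [big, φ, Finset.mem_filter, Finset.mem_product, UU, Finset.mem_powerset]
    refine ⟨⟨⟨hWUV.trans hUVP, ?_⟩, ⟨Finset.sdiff_subset.trans hIP, ?_⟩,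
      Finset.sdiff_subset.trans hU, hH.trans hIP⟩, ?_, ?_⟩
    · have h2 : qW (U ∪ V) * qW (U ∩ V) = qW U * qW V := Finset.prod_union_inter
      have h3 : 0 < qW (U ∩ V) := qW_pos fun p hp => hP p (hIP hp)
      calc qW (WW (U, V, H)) ≤ qW (U ∪ V) := hqmono hWUV hUVP
        _ ≤ qW (U ∪ V) * qW (U ∩ V) := Nat.le_mul_of_pos_right _ h3
        _ = qW U * qW V := h2
        _ ≤ R * R := Nat.mul_le_mul hqU hqV
        _ = R ^ 2 := (sq R).symm
    · exact (hqmono (Finset.sdiff_subset.trans Finset.inter_subset_left) hU).trans hqU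
    · intro a ha
      simp only [WW, Finset.mem_union]
      exact Or.inl (Or.inl ha)
    · intro a ha
      simp only [WW, Finset.mem_union]
      exact Or.inr ha
  calc _ ≤ ∑ t ∈ TT P R, g (φ t) := by
        apply Finset.sum_le_sum
        rintro ⟨U, V, H⟩ ht
        have h1 := hmemT _ ht
        simp only at h1
        obtain ⟨hU, hqU, hV, hqV, hH⟩ := h1
        refine (le_abs_self _).trans ?_
        rw [abs_mul]
        simp only [g, φ]
        apply mul_le_mul_of_nonneg_right _ (abs_nonneg _)
        rw [abs_mul, abs_mul, abs_pow, abs_pow, abs_neg, abs_one, one_pow, one_pow, one_mul, one_mul,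
          abs_div, abs_of_nonneg (by positivity : (0:ℝ) ≤ qW U * qW V)]
        exact cf_abs (fun p hp => hP p (hU hp)) (fun p hp => hP p (hV hp)) hH
    _ = ∑ u ∈ (TT P R).image φ, g u := (Finset.sum_image hinj).symm
    _ ≤ ∑ u ∈ big, g u := by
        apply Finset.sum_le_sum_of_subset_of_nonneg
        · intro u hu
          obtain ⟨t, ht, rfl⟩ := Finset.mem_image.1 hu
          exact hmaps t ht
        · intro u _ _; exact hg0 u
    _ = _ := by
        simp only [big]
        rw [Finset.sum_filter, Finset.sum_product, Finset.mul_sum]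
        apply Finset.sum_congr rfl
        intro W hW
        have hWP := (hUP hW).1
        rw [Finset.sum_product, GG, Finset.sum_mul]
        apply Finset.sum_congr rfl
        intro K _
        rw [← Finset.sum_filter]
        have hs : (P.powerset ×ˢ P.powerset).filter (fun a => a.1 ⊆ W ∧ a.2 ⊆ W) =
            W.powerset ×ˢ W.powerset := by
          ext ⟨a, b⟩
          simp only [Finset.mem_filter, Finset.mem_product, Finset.mem_powerset]
          constructor
          · exact fun h => h.2
          · exact fun h => ⟨⟨h.1.trans hWP, h.2.trans hWP⟩, h⟩
        dsimp only
        rw [hs]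
        simp only [g]
        rw [Finset.sum_const, Finset.card_product, Finset.card_powerset, nsmul_eq_mul]
        push_cast
        rw [← mul_pow]
        norm_num
        ring

lemma SS_prime (P : Finset ℕ) (hP : ∀ p ∈ P, p.Prime) (R : ℕ) (hPR : ∀ p ∈ P, p ≤ R) (p : ℕ)
    (hp : p.Prime) (hpR : R < p) : SS P R p = GG P R := by
  unfold SS GG
  apply Finset.sum_congr rfl
  intro U hU
  have hUP : U ⊆ P := Finset.mem_powerset.1 (Finset.mem_filter.1 hU).1
  have : cW U p = (-1) ^ U.card := by
    unfold cW
    rw [Finset.prod_congr rfl (g := fun _ => (-1:ℝ)), Finset.prod_const]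
    intro u hu
    unfold chi
    rw [if_neg]
    · ring
    · intro h
      have h1 : u ∣ p := by exact_mod_cast h
      have h2 := (Nat.prime_dvd_prime_iff_eq (hP u (hUP hu)) hp).1 h1
      have := hPR u (hUP hu)
      omega
  rw [this, mul_right_comm, ← mul_pow]
  norm_num

lemma sieve (P : Finset ℕ) (hP : ∀ p ∈ P, p.Prime) (R N : ℕ) (hPR : ∀ p ∈ P, p ≤ R)
    (hN : 0 < N) (hG : 0 < GG P R) (f : ℤ → ℝ) (hf : ∀ x, 0 ≤ f x) (x : ℤ) :
    (∑ p ∈ (Finset.range (N + 1)).filter (fun p => p.Prime ∧ R < p), Real.log p * f (x + p)) / N ≤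
      Real.log N / GG P R * ∑ W ∈ UU P (R ^ 2), 4 ^ W.card / (qW W : ℝ) * |av W N f x| := by
  have h0 : (∑ p ∈ (Finset.range (N + 1)).filter (fun p => p.Prime ∧ R < p), Real.log p * f (x + p)) ≤
      Real.log N / GG P R ^ 2 *
        ∑ n ∈ Finset.range N, SS P R ((n:ℤ) + 1) ^ 2 * f (x + ((n:ℤ) + 1)) := by
    have hlogN : 0 ≤ Real.log N := Real.log_natCast_nonneg N
    calc _ ≤ ∑ p ∈ (Finset.range (N + 1)).filter (fun p => p.Prime ∧ R < p),
          Real.log N / GG P R ^ 2 * (SS P R p ^ 2 * f (x + p)) := by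
          apply Finset.sum_le_sum
          intro p hp
          simp only [Finset.mem_filter, Finset.mem_range] at hp
          rw [SS_prime P hP R hPR p hp.2.1 hp.2.2, ← mul_assoc, div_mul_cancel₀ _ (by positivity)]
          apply mul_le_mul_of_nonneg_right _ (hf _)
          apply Real.log_le_log
          · exact_mod_cast hp.2.1.pos
          · exact_mod_cast Nat.lt_succ_iff.1 hp.1
      _ ≤ ∑ p ∈ Finset.Ico 1 (N + 1), Real.log N / GG P R ^ 2 * (SS P R p ^ 2 * f (x + p)) := by
          apply Finset.sum_le_sum_of_subset_of_nonneg
          · intro p hp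
            simp only [Finset.mem_filter, Finset.mem_range, Finset.mem_Ico] at hp ⊢
            exact ⟨hp.2.1.one_le, hp.1⟩
          · intro p _ _
            have := hf (x + p)
            positivity
      _ = _ := by
          rw [← Finset.mul_sum, Finset.sum_Ico_eq_sum_range]
          congr 1
          apply Finset.sum_congr (by simp)
          intro n _
          push_cast
          rw [add_comm (1:ℤ)]
  have h1 := sieve_avg P hP R N f x
  have hNr : (0:ℝ) < N := by exact_mod_cast hN
  calc _ ≤ (Real.log N / GG P R ^ 2 *
        ∑ n ∈ Finset.range N, SS P R ((n:ℤ) + 1) ^ 2 * f (x + ((n:ℤ) + 1))) / N := by gcongr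
    _ = Real.log N / GG P R ^ 2 *
        ((∑ n ∈ Finset.range N, SS P R ((n:ℤ) + 1) ^ 2 * f (x + ((n:ℤ) + 1))) / N) := by ring
    _ ≤ Real.log N / GG P R ^ 2 *
        (GG P R * ∑ W ∈ UU P (R ^ 2), 4 ^ W.card / (qW W : ℝ) * |av W N f x|) := by
        have : 0 ≤ Real.log N := Real.log_natCast_nonneg N
        gcongr
    _ = _ := by field_simp

end PM

namespace PM
open scoped ENNReal
open MeasureTheory

lemma dyadic_primes (k : ℕ) (hk : 1 ≤ k) :
    ∑ p ∈ (Finset.Ioc (2 ^ k) (2 ^ (k + 1))).filter Nat.Prime, (1:ℝ) / p ≤ 2 / k := by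
  set s := (Finset.Ioc (2 ^ k) (2 ^ (k + 1))).filter Nat.Prime with hs
  have hmem : ∀ p ∈ s, 2 ^ k < p ∧ p ≤ 2 ^ (k + 1) ∧ p.Prime := by
    intro p hp
    rw [hs, Finset.mem_filter, Finset.mem_Ioc] at hp
    exact ⟨hp.1.1, hp.1.2, hp.2⟩
  have h1 : ∏ p ∈ s, p ∣ (2 ^ k + 2 ^ k).choose (2 ^ k) := by
    apply Finset.prod_primes_dvd
    · intro p hp; exact (hmem p hp).2.2.prime
    · intro p hp
      obtain ⟨a, b, c⟩ := hmem p hp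
      exact c.dvd_choose_add a a (by rw [pow_succ] at b; omega)
  have h2 : (2 ^ k) ^ s.card ≤ ∏ p ∈ s, p := by
    apply Finset.pow_card_le_prod
    intro p hp
    exact (hmem p hp).1.le
  have h3 : (2 ^ k) ^ s.card ≤ 2 ^ (2 ^ k + 2 ^ k) :=
    h2.trans ((Nat.le_of_dvd (Nat.choose_pos (Nat.le_add_left _ _)) h1).trans (Nat.choose_le_two_pow _ _))
  rw [← pow_mul] at h3
  have h4 : k * s.card ≤ 2 ^ k + 2 ^ k := (Nat.pow_le_pow_iff_right (by norm_num)).1 h3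
  have hk0 : (0:ℝ) < k := by exact_mod_cast hk
  calc ∑ p ∈ s, (1:ℝ) / p ≤ ∑ p ∈ s, (1:ℝ) / 2 ^ k := by
        apply Finset.sum_le_sum
        intro p hp
        have : (2:ℝ) ^ k < p := by exact_mod_cast (hmem p hp).1
        gcongr
    _ = s.card / 2 ^ k := by rw [Finset.sum_const, nsmul_eq_mul]; ring
    _ ≤ 2 / k := by
        rw [div_le_div_iff₀ (by positivity) hk0]
        have : ((k * s.card : ℕ) : ℝ) ≤ ((2 ^ k + 2 ^ k : ℕ) : ℝ) := by exact_mod_cast h4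
        push_cast at this
        linarith

lemma mertens (m : ℕ) (hm : 2 ≤ m) :
    ∏ p ∈ (Finset.range (2 ^ m + 1)).filter Nat.Prime, (1 + (1:ℝ) / p) ≤ 2 * ((m:ℝ) - 1) ^ 2 := by
  induction m, hm using Nat.le_induction with
  | base =>
    have : (Finset.range (2 ^ 2 + 1)).filter Nat.Prime = {2, 3} := by decide
    rw [this]; norm_num
  | succ k hk ih =>
    have hsplit : (Finset.range (2 ^ (k + 1) + 1)).filter Nat.Prime =
        (Finset.range (2 ^ k + 1)).filter Nat.Prime ∪
          (Finset.Ioc (2 ^ k) (2 ^ (k + 1))).filter Nat.Prime := by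
      rw [← Finset.filter_union]
      congr 1
      ext a
      have : 2 ^ k ≤ 2 ^ (k + 1) := Nat.pow_le_pow_right (by norm_num) (by omega)
      simp only [Finset.mem_union, Finset.mem_range, Finset.mem_Ioc]
      omega
    rw [hsplit, Finset.prod_union]
    · have hk0 : (2:ℝ) ≤ k := by exact_mod_cast hk
      have h1 : ∏ p ∈ (Finset.Ioc (2 ^ k) (2 ^ (k + 1))).filter Nat.Prime, (1 + (1:ℝ) / p) ≤
          (k / (k - 1)) ^ 2 := by
        calc _ ≤ ∏ p ∈ (Finset.Ioc (2 ^ k) (2 ^ (k + 1))).filter Nat.Prime, Real.exp (1 / p) := by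
              apply Finset.prod_le_prod
              · intro p _; positivity
              · intro p _; rw [add_comm]; exact Real.add_one_le_exp _
          _ = Real.exp (∑ p ∈ (Finset.Ioc (2 ^ k) (2 ^ (k + 1))).filter Nat.Prime, (1:ℝ) / p) :=
              (Real.exp_sum _ _).symm
          _ ≤ Real.exp (2 / k) := Real.exp_le_exp.2 (dyadic_primes k (by omega))
          _ = Real.exp (1 / k) ^ 2 := by rw [← Real.exp_nat_mul]; congr 1; push_cast; ring
          _ ≤ _ := by
              gcongr
              have h2 := Real.add_one_le_exp (-(1 / (k:ℝ)))
              rw [Real.exp_neg] at h2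
              have h3 := Real.exp_pos (1 / (k:ℝ))
              rw [le_div_iff₀ (by linarith)]
              have h4 : Real.exp (1 / (k:ℝ)) * (-(1 / (k:ℝ)) + 1) ≤ 1 := by
                calc _ ≤ Real.exp (1 / (k:ℝ)) * (Real.exp (1 / (k:ℝ)))⁻¹ := by gcongr
                  _ = 1 := mul_inv_cancel₀ h3.ne'
              have h5 : Real.exp (1 / (k:ℝ)) * ((k:ℝ) - 1) =
                  k * (Real.exp (1 / (k:ℝ)) * (-(1 / (k:ℝ)) + 1)) := by field_simp; ring
              rw [h5]
              nlinarith
      calc _ ≤ (2 * ((k:ℝ) - 1) ^ 2) * (k / (k - 1)) ^ 2 := by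
            apply mul_le_mul ih h1 (Finset.prod_nonneg fun _ _ => by positivity) (by positivity)
        _ = _ := by
            have : (k:ℝ) - 1 ≠ 0 := by linarith
            push_cast
            field_simp
            ring
    · rw [Finset.disjoint_left]
      intro a ha hb
      simp only [Finset.mem_filter, Finset.mem_range, Finset.mem_Ioc] at ha hb
      omega

lemma GG_lower (y R : ℕ) :
    Real.log (R + 1) ≤ 2 * (∏ p ∈ (Finset.range (y + 1)).filter Nat.Prime, (1 + (1:ℝ) / p)) *
      GG ((Finset.Ioc y R).filter Nat.Prime) R := by
  classical
  set P := (Finset.Ioc y R).filter Nat.Prime with hP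
  set Q := (Finset.range (y + 1)).filter Nat.Prime with hQ
  have h0 : Real.log (R + 1) ≤ ∑ n ∈ Finset.Icc 1 R, (1:ℝ) / n := by
    have := log_add_one_le_harmonic R
    rw [harmonic_eq_sum_Icc] at this
    push_cast at this
    simpa using this
  refine h0.trans ?_
  choose a b hab using Nat.sq_mul_squarefree
  let φ : ℕ → ℕ × Finset ℕ × Finset ℕ := fun n =>
    (b n, (a n).primeFactors.filter (· ≤ y), (a n).primeFactors.filter (fun p => ¬ p ≤ y))
  let g : ℕ × Finset ℕ × Finset ℕ → ℝ := fun u =>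
    (1 / (u.1:ℝ) ^ 2) * ((1 / (qW u.2.1 : ℝ)) * (1 / (qW u.2.2 : ℝ)))
  have hq : ∀ n, qW ((a n).primeFactors.filter (· ≤ y)) *
      qW ((a n).primeFactors.filter (fun p => ¬ p ≤ y)) = a n := by
    intro n
    have := Finset.prod_filter_mul_prod_filter_not (a n).primeFactors (· ≤ y) (fun p => p)
    rw [Nat.prod_primeFactors_of_squarefree (hab n).2] at this
    exact this
  have hn : ∀ n, n = (φ n).1 ^ 2 * (qW (φ n).2.1 * qW (φ n).2.2) := by
    intro n
    simp only [φ]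
    rw [hq, (hab n).1]
  have hinj : Set.InjOn φ (Finset.Icc 1 R : Set ℕ) := by
    intro n _ n' _ h
    rw [hn n, hn n', h]
  have hmaps : ∀ n ∈ Finset.Icc 1 R, φ n ∈ Finset.Ioo 0 (R + 1) ×ˢ Q.powerset ×ˢ UU P R := by
    intro n hnR
    rw [Finset.mem_Icc] at hnR
    have e := (hab n).1
    have hb : 0 < b n := by
      rcases Nat.eq_zero_or_pos (b n) with h | h
      · rw [h] at e; simp at e; omega
      · exact h
    have ha : 0 < a n := by
      rcases Nat.eq_zero_or_pos (a n) with h | h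
      · rw [h] at e; simp at e; omega
      · exact h
    have han : a n ≤ R := by
      have : 1 ≤ b n ^ 2 := Nat.one_le_pow _ _ hb
      nlinarith
    have hbn : b n ≤ R := by
      have : b n ≤ b n ^ 2 := Nat.le_self_pow (by norm_num) _
      nlinarith
    simp only [φ, Finset.mem_product, Finset.mem_Ioo, Finset.mem_powerset, UU, Finset.mem_filter]
    refine ⟨⟨hb, by omega⟩, ?_, ?_, ?_⟩
    · intro p hp
      simp only [Finset.mem_filter, Nat.mem_primeFactors] at hp
      simp only [hQ, Finset.mem_filter, Finset.mem_range]
      exact ⟨by omega, hp.1.1⟩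
    · intro p hp
      simp only [Finset.mem_filter, Nat.mem_primeFactors] at hp
      simp only [hP, Finset.mem_filter, Finset.mem_Ioc]
      have := Nat.le_of_dvd ha hp.1.2.1
      exact ⟨⟨by omega, by omega⟩, hp.1.1⟩
    · have h1 := hq n
      have h2 : qW ((a n).primeFactors.filter (fun p => ¬ p ≤ y)) ∣ a n := Dvd.intro_left _ h1
      exact (Nat.le_of_dvd ha h2).trans han
  calc ∑ n ∈ Finset.Icc 1 R, (1:ℝ) / n = ∑ n ∈ Finset.Icc 1 R, g (φ n) := by
        apply Finset.sum_congr rfl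
        intro n _
        conv_lhs => rw [hn n]
        simp only [g]
        push_cast
        rw [one_div_mul_one_div, one_div_mul_one_div]
    _ = ∑ u ∈ (Finset.Icc 1 R).image φ, g u := (Finset.sum_image hinj).symm
    _ ≤ ∑ u ∈ Finset.Ioo 0 (R + 1) ×ˢ Q.powerset ×ˢ UU P R, g u := by
        apply Finset.sum_le_sum_of_subset_of_nonneg
        · intro u hu
          obtain ⟨t, ht, rfl⟩ := Finset.mem_image.1 hu
          exact hmaps t ht
        · intro u _ _; simp only [g]; positivity
    _ = (∑ b ∈ Finset.Ioo 0 (R + 1), ((b:ℝ) ^ 2)⁻¹) * ((∏ p ∈ Q, (1 + (1:ℝ) / p)) * GG P R) := by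
        rw [Finset.sum_product, Finset.sum_mul]
        apply Finset.sum_congr rfl
        intro b _
        rw [Finset.sum_product, Finset.prod_one_add, GG, Finset.sum_mul_sum, Finset.mul_sum]
        apply Finset.sum_congr rfl
        intro A _
        rw [Finset.mul_sum]
        apply Finset.sum_congr rfl
        intro U _
        simp only [g, qW]
        push_cast
        simp
    _ ≤ 2 * ((∏ p ∈ Q, (1 + (1:ℝ) / p)) * GG P R) := by
        have h1 := sum_Ioo_inv_sq_le (α := ℝ) 0 (R + 1)
        have h2 : 0 ≤ GG P R := Finset.sum_nonneg fun _ _ => by positivity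
        have h3 : 0 ≤ ∏ p ∈ Q, (1 + (1:ℝ) / p) := Finset.prod_nonneg fun _ _ => by positivity
        apply mul_le_mul_of_nonneg_right _ (mul_nonneg h3 h2)
        simpa using h1
    _ = _ := by ring

lemma GG_lower' (m r : ℕ) (hm : 2 ≤ m) :
    r * Real.log 2 ≤ 4 * (m:ℝ) ^ 2 * GG ((Finset.Ioc (2 ^ m) (2 ^ r)).filter Nat.Prime) (2 ^ r) := by
  have h1 := GG_lower (2 ^ m) (2 ^ r)
  have h2 := mertens m hm
  have h3 : 0 ≤ GG ((Finset.Ioc (2 ^ m) (2 ^ r)).filter Nat.Prime) (2 ^ r) :=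
    Finset.sum_nonneg fun _ _ => by positivity
  have hm' : (2:ℝ) ≤ m := by exact_mod_cast hm
  calc r * Real.log 2 = Real.log (2 ^ r) := by rw [Real.log_pow]
    _ ≤ Real.log ((2 ^ r : ℕ) + 1) := by
        apply Real.log_le_log (by positivity)
        push_cast; linarith
    _ ≤ _ := h1
    _ ≤ 2 * (2 * ((m:ℝ) - 1) ^ 2) * GG ((Finset.Ioc (2 ^ m) (2 ^ r)).filter Nat.Prime) (2 ^ r) := by
        gcongr
    _ ≤ _ := by
        apply mul_le_mul_of_nonneg_right _ h3
        nlinarith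

lemma theta_lower (n : ℕ) (hn : 1 ≤ n) :
    (2:ℝ) ^ n / 2 ^ 16 ≤ ∑ p ∈ (Finset.range (2 ^ n + 1)).filter Nat.Prime, Real.log p := by
  have hl1 := Real.log_two_gt_d9
  have hl2 := Real.log_two_lt_d9
  rcases Nat.lt_or_ge n 16 with h | h
  · have h1 : Real.log ((2:ℕ):ℝ) ≤ ∑ p ∈ (Finset.range (2 ^ n + 1)).filter Nat.Prime, Real.log p := by
      apply Finset.single_le_sum (f := fun p : ℕ => Real.log p)
      · intro p _; exact Real.log_natCast_nonneg p
      · simp only [Finset.mem_filter, Finset.mem_range]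
        have : 2 ^ 1 ≤ 2 ^ n := Nat.pow_le_pow_right (by norm_num) hn
        exact ⟨by omega, Nat.prime_two⟩
    have h2 : (2:ℝ) ^ n ≤ 2 ^ 15 := pow_le_pow_right₀ (by norm_num) (by omega)
    push_cast at h1
    have : (2:ℝ) ^ n / 2 ^ 16 ≤ 2 ^ 15 / 2 ^ 16 := by gcongr
    norm_num at this
    norm_num
    linarith
  · have h1 := Chebyshev.theta_ge (2 ^ n)
    rw [Chebyshev.theta_eq_sum_Icc, Nat.floor_natCast] at h1
    have h2 : (Finset.Icc 0 (2 ^ n)) = Finset.range (2 ^ n + 1) := by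
      ext a; simp only [Finset.mem_Icc, Finset.mem_range]; omega
    rw [h2] at h1
    refine le_trans ?_ h1
    have h3 : 196 * n ^ 2 ≤ 2 ^ n := by
      clear h1 h2 hn
      induction n, h using Nat.le_induction with
      | base => norm_num
      | succ k hk ih => rw [pow_succ 2 k]; nlinarith
    have h3r : 196 * (n:ℝ) ^ 2 ≤ 2 ^ n := by exact_mod_cast h3
    have hnr : (16:ℝ) ≤ n := by exact_mod_cast h
    push_cast
    set X : ℝ := 2 ^ n with hX
    have hX0 : 0 < X := by positivity
    have hs : 14 * n ≤ Real.sqrt X := by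
      apply Real.le_sqrt_of_sq_le
      linarith [h3r]
    have hss := Real.mul_self_sqrt hX0.le
    have hs0 := Real.sqrt_nonneg X
    have e1 : Real.log X = n * Real.log 2 := by rw [hX, Real.log_pow]
    have e2 : Real.log (X + 1) ≤ n * Real.log 2 + 1 := by
      have hX1 : 1 ≤ X := one_le_pow₀ (by norm_num)
      calc Real.log (X + 1) ≤ Real.log (2 * X) := Real.log_le_log (by linarith) (by linarith)
        _ = Real.log 2 + Real.log X := Real.log_mul (by norm_num) hX0.ne'
        _ ≤ _ := by rw [e1]; linarith
    rw [e1]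
    have e3 : 2 * Real.sqrt X * (n * Real.log 2) ≤ X * (1 / 10) := by
      have : n * Real.log 2 ≤ Real.sqrt X / 20 := by nlinarith
      nlinarith
    have e4 : n * Real.log 2 + 1 ≤ X / 10 := by nlinarith
    have e5 : X * Real.log 2 ≥ X * 0.69 := by nlinarith
    have e6 : X / 2 ^ 16 ≤ X / 10 := by gcongr; norm_num
    linarith

end PM

namespace PM
open scoped ENNReal
open MeasureTheory

/-- dyadic blocks -/
def BB (m s : ℕ) : Finset (Finset ℕ) :=
  (((Finset.Ioc (2 ^ m) (2 ^ (s + 1))).filter Nat.Prime).powerset).filter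
    (fun W => W ≠ ∅ ∧ 2 ^ s ≤ qW W ∧ qW W < 2 ^ (s + 1))

lemma BB_mem {m s : ℕ} {W : Finset ℕ} (h : W ∈ BB m s) :
    (∀ p ∈ W, 2 ^ m < p ∧ p.Prime) ∧ W ≠ ∅ ∧ 2 ^ s ≤ qW W ∧ qW W < 2 ^ (s + 1) := by
  unfold BB at h
  rw [Finset.mem_filter, Finset.mem_powerset] at h
  refine ⟨fun p hp => ?_, h.2⟩
  have := h.1 hp
  rw [Finset.mem_filter, Finset.mem_Ioc] at this
  exact ⟨this.1.1, this.2⟩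

lemma le_qW {W : Finset ℕ} (hW : ∀ p ∈ W, p.Prime) {p : ℕ} (hp : p ∈ W) : p ≤ qW W :=
  Nat.le_of_dvd (qW_pos hW) (Finset.dvd_prod_of_mem _ hp)

lemma BB_empty {m s : ℕ} (h : s < m) : BB m s = ∅ := by
  rw [Finset.eq_empty_iff_forall_notMem]
  intro W hW
  obtain ⟨h1, h2, _, h4⟩ := BB_mem hW
  obtain ⟨p, hp⟩ := Finset.nonempty_iff_ne_empty.2 h2
  have h5 := le_qW (fun p hp => (h1 p hp).2) hp
  have h6 := (h1 p hp).1
  have : 2 ^ (s + 1) ≤ 2 ^ m := Nat.pow_le_pow_right (by norm_num) h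
  omega

lemma BB_card (m s : ℕ) : (BB m s).card ≤ 2 ^ s := by
  have : (BB m s).card ≤ (Finset.Ico (2 ^ s) (2 ^ (s + 1))).card := by
    apply Finset.card_le_card_of_injOn qW
    · intro W hW
      obtain ⟨_, _, h3, h4⟩ := BB_mem hW
      exact Finset.mem_coe.2 (Finset.mem_Ico.2 ⟨h3, h4⟩)
    · intro W hW V hV h
      have h1 := Nat.primeFactors_prod (fun p hp => ((BB_mem hW).1 p hp).2)
      have h2 := Nat.primeFactors_prod (fun p hp => ((BB_mem hV).1 p hp).2)
      rw [← h1, ← h2]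
      unfold qW at h
      rw [h]
  rw [Nat.card_Ico, pow_succ] at this
  omega

/-- block maximal function -/
noncomputable def ZZ (m : ℕ) (f : ℤ → ℝ) (s : ℕ) (x : ℤ) : ℝ≥0∞ :=
  ⨆ n : ℕ, ∑ W ∈ BB m s, ENNReal.ofReal (4 ^ W.card / qW W) * ‖av W (2 ^ (9 * s + n)) f x‖ₑ

lemma ZZ_bound (m : ℕ) (hm : 24 ≤ m) (ρ : ℝ) (hρ0 : 0 < ρ) (hρ1 : ρ < 1) (hρ : ρ ^ 8 = 1 / 2)
    (f : ℤ → ℝ) (hf0 : ∀ x, 0 ≤ f x) (hf : f.support.Finite) (s : ℕ) :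
    nrm (ZZ m f s) ≤ ENNReal.ofReal (44 * ρ ^ m * ρ ^ s) * rn f := by
  rcases Nat.lt_or_ge s m with h | h
  · have : ZZ m f s = fun _ => 0 := by
      ext x; simp [ZZ, BB_empty h]
    rw [this, nrm_zero]; exact zero_le
  · set D : ℝ := 2 ^ (s / 24) with hD
    have hD1 : 1 ≤ D := one_le_pow₀ (by norm_num)
    have hb := block (BB m s) (fun W hW p hp => ((BB_mem hW).1 p hp).2) s
      (fun W hW => (BB_mem hW).2.2.1) (fun W hW => (BB_mem hW).2.2.2.le) (BB_card m s) D hD1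
      (fun W hW => by
        rw [hD]
        apply pow_le_pow_right₀ (by norm_num)
        obtain ⟨h1, _, _, h4⟩ := BB_mem hW
        have h5 : (2 ^ 24) ^ W.card ≤ qW W := by
          apply Finset.pow_card_le_prod
          intro p hp
          have : 2 ^ 24 ≤ 2 ^ m := Nat.pow_le_pow_right (by norm_num) hm
          exact this.trans (h1 p hp).1.le
        rw [← pow_mul] at h5
        have h6 : 24 * W.card < s + 1 := (Nat.pow_lt_pow_iff_right (by norm_num)).1 (h5.trans_lt h4)
        rw [Nat.le_div_iff_mul_le (by norm_num)]
        omega) f hf0 hf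
    refine hb.trans ?_
    gcongr ENNReal.ofReal ?_ * _
    have hs0 : (0:ℝ) < Real.sqrt (2 ^ s) := Real.sqrt_pos.2 (by positivity)
    have h1 : D ^ 4 / Real.sqrt (2 ^ s) ≤ ρ ^ (2 * s) := by
      rw [← pow_le_pow_iff_left₀ (by positivity) (by positivity) (by norm_num : (4:ℕ) ≠ 0)]
      have hr8 : (ρ ^ (2 * s)) ^ 4 = (1 / 2) ^ s := by
        rw [← hρ, ← pow_mul, ← pow_mul]
        congr 1
        ring
      have hD16 : (D ^ 4) ^ 4 = D ^ (4 * 4) := by ring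
      rw [div_pow, hD16, show Real.sqrt (2 ^ s) ^ 4 = (Real.sqrt (2 ^ s) ^ 2) ^ 2 by ring,
        Real.sq_sqrt (by positivity), hr8, one_div, inv_pow,
        div_le_iff₀ (by positivity)]
      have h2 : D ^ (4 * 4) ≤ 2 ^ s := by
        rw [hD, ← pow_mul]
        apply pow_le_pow_right₀ (by norm_num)
        omega
      calc D ^ (4 * 4) ≤ 2 ^ s := h2
        _ = _ := by field_simp
    have h3 : ρ ^ (2 * s) ≤ ρ ^ m * ρ ^ s := by
      rw [← pow_add]
      exact pow_le_pow_of_le_one hρ0.le hρ1.le (by omega)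
    calc 44 * D ^ 4 / Real.sqrt (2 ^ s) = 44 * (D ^ 4 / Real.sqrt (2 ^ s)) := by ring
      _ ≤ 44 * (ρ ^ m * ρ ^ s) := by gcongr; exact h1.trans h3
      _ = _ := by ring

/-- small primes part -/
noncomputable def sm (n : ℕ) (f : ℤ → ℝ) (x : ℤ) : ℝ :=
  ∑ p ∈ (Finset.range (2 ^ (n / 20) + 1)).filter Nat.Prime, (Real.log p / 2 ^ n) * f (x + p)

lemma sm_bound (m : ℕ) (ρ : ℝ) (hρ0 : 0 < ρ) (hρ : ρ ^ 8 = 1 / 2)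
    (f : ℤ → ℝ) (n : ℕ) (hn : 20 * m ≤ n) :
    rn (sm n f) ≤ ENNReal.ofReal (ρ ^ m * ρ ^ n) * rn f := by
  refine (rn_conv_le _ (fun p : ℕ => Real.log p / 2 ^ n) (fun p => (p:ℤ)) f).trans ?_
  gcongr ENNReal.ofReal ?_ * _
  set r := n / 20 with hr
  have hc : ((Finset.range (2 ^ r + 1)).filter Nat.Prime).card ≤ 2 ^ r := by
    have : (Finset.range (2 ^ r + 1)).filter Nat.Prime ⊆ Finset.Ioc 0 (2 ^ r) := by
      intro p hp
      simp only [Finset.mem_filter, Finset.mem_range, Finset.mem_Ioc] at hp ⊢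
      exact ⟨hp.2.pos, by omega⟩
    simpa using Finset.card_le_card this
  have h1 : ∑ p ∈ (Finset.range (2 ^ r + 1)).filter Nat.Prime, |Real.log p / 2 ^ n| ≤
      2 ^ r * (2 ^ r / 2 ^ n) := by
    refine (Finset.sum_le_card_nsmul _ _ ((2:ℝ) ^ r / 2 ^ n) ?_).trans ?_
    · intro p hp
      simp only [Finset.mem_filter, Finset.mem_range] at hp
      have hp1 : (p:ℝ) ≤ 2 ^ r := by exact_mod_cast Nat.lt_succ_iff.1 hp.1
      have hp0 : (0:ℝ) < p := by exact_mod_cast hp.2.pos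
      rw [abs_of_nonneg (div_nonneg (Real.log_natCast_nonneg p) (by positivity))]
      gcongr
      have := Real.log_le_sub_one_of_pos hp0
      linarith
    · rw [nsmul_eq_mul]
      gcongr
      exact_mod_cast hc
  refine h1.trans ?_
  rw [← pow_le_pow_iff_left₀ (by positivity) (by positivity) (by norm_num : (8:ℕ) ≠ 0)]
  rw [mul_pow, mul_pow (ρ ^ m), ← pow_mul, ← pow_mul ρ, ← pow_mul ρ, mul_comm m, mul_comm n 8, pow_mul ρ, pow_mul ρ, hρ,
    div_pow, ← pow_mul, ← pow_mul, one_div, inv_pow, inv_pow, ← mul_inv, ← pow_add,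
    mul_div_assoc', ← pow_add, div_le_iff₀ (by positivity), ← div_eq_inv_mul, le_div_iff₀ (by positivity),
    ← pow_add]
  apply pow_le_pow_right₀ (by norm_num)
  omega

/-- prime average, real version -/
noncomputable def mf (n : ℕ) (f : ℤ → ℝ) (x : ℤ) : ℝ :=
  (∑ p ∈ (Finset.range (2 ^ n + 1)).filter Nat.Prime, Real.log p)⁻¹ *
    ∑ p ∈ (Finset.range (2 ^ n + 1)).filter Nat.Prime, Real.log p * f (x + p)

lemma mf_le (n : ℕ) (hn : 1 ≤ n) (f : ℤ → ℝ) (hf : ∀ x, 0 ≤ f x) (x : ℤ) :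
    mf n f x ≤ 2 ^ 16 * ((∑ p ∈ (Finset.range (2 ^ n + 1)).filter Nat.Prime,
      Real.log p * f (x + p)) / 2 ^ n) := by
  have h := theta_lower n hn
  have h0 : 0 ≤ ∑ p ∈ (Finset.range (2 ^ n + 1)).filter Nat.Prime, Real.log p * f (x + p) :=
    Finset.sum_nonneg fun p _ => mul_nonneg (Real.log_natCast_nonneg p) (hf _)
  unfold mf
  calc _ ≤ ((2:ℝ) ^ n / 2 ^ 16)⁻¹ * ∑ p ∈ (Finset.range (2 ^ n + 1)).filter Nat.Prime,
        Real.log p * f (x + p) := by gcongr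
    _ = _ := by rw [inv_div]; ring

lemma av_empty (N : ℕ) (f : ℤ → ℝ) (x : ℤ) : av ∅ N f x = psum 1 f N x / N := by
  unfold av psum cW
  simp

lemma small_n (m n : ℕ) (hn : n ≤ 20 * m) (f : ℤ → ℝ) (hf : ∀ x, 0 ≤ f x) (x : ℤ) :
    (∑ p ∈ (Finset.range (2 ^ n + 1)).filter Nat.Prime, Real.log p * f (x + p)) / 2 ^ n ≤
      160 * (m:ℝ) ^ 2 * (psum 1 f (2 ^ n) x / (2 ^ n : ℕ)) := by
  have hl2 := Real.log_two_lt_d9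
  have hl1 := Real.log_two_gt_d9
  have hnm : (n:ℝ) ≤ 20 * m := by exact_mod_cast hn
  have hps : 0 ≤ psum 1 f (2 ^ n) x := Finset.sum_nonneg fun _ _ => hf _
  have hlog : (n:ℝ) * Real.log 2 ≤ 160 * (m:ℝ) ^ 2 := by
    have h1 : (m:ℝ) ≤ m ^ 2 := by exact_mod_cast Nat.le_self_pow (by norm_num) m
    have : (n:ℝ) * Real.log 2 ≤ n * 1 := by gcongr; linarith
    nlinarith [sq_nonneg (m:ℝ)]
  have h1 : ∑ p ∈ (Finset.range (2 ^ n + 1)).filter Nat.Prime, Real.log p * f (x + p) ≤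
      160 * (m:ℝ) ^ 2 * psum 1 f (2 ^ n) x := by
    calc _ ≤ ∑ p ∈ (Finset.range (2 ^ n + 1)).filter Nat.Prime, 160 * (m:ℝ) ^ 2 * f (x + p) := by
          apply Finset.sum_le_sum
          intro p hp
          simp only [Finset.mem_filter, Finset.mem_range] at hp
          apply mul_le_mul_of_nonneg_right _ (hf _)
          refine le_trans ?_ hlog
          rw [← Real.log_pow]
          apply Real.log_le_log
          · exact_mod_cast hp.2.pos
          · exact_mod_cast Nat.lt_succ_iff.1 hp.1
      _ ≤ ∑ p ∈ Finset.Ico (1:ℕ) (2 ^ n + 1), 160 * (m:ℝ) ^ 2 * f (x + (p:ℤ)) := by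
          apply Finset.sum_le_sum_of_subset_of_nonneg
          · intro p hp
            simp only [Finset.mem_filter, Finset.mem_range, Finset.mem_Ico] at hp ⊢
            exact ⟨hp.2.one_le, hp.1⟩
          · intro p _ _
            have := hf (x + p)
            positivity
      _ = _ := by
          rw [← Finset.mul_sum, Finset.sum_Ico_eq_sum_range]
          congr 1
          unfold psum
          apply Finset.sum_congr (by simp)
          intro j _
          push_cast
          ring_nf
  push_cast
  rw [mul_div_assoc']
  gcongr

lemma large_n (m n : ℕ) (hm : 24 ≤ m) (hn : 20 * m ≤ n) (f : ℤ → ℝ) (hf : ∀ x, 0 ≤ f x) (x : ℤ) :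
    (∑ p ∈ (Finset.range (2 ^ n + 1)).filter Nat.Prime, Real.log p * f (x + p)) / 2 ^ n ≤
      sm n f x + 160 * (m:ℝ) ^ 2 *
        ∑ W ∈ UU ((Finset.Ioc (2 ^ m) (2 ^ (n / 20))).filter Nat.Prime) ((2 ^ (n / 20)) ^ 2),
          4 ^ W.card / (qW W : ℝ) * |av W (2 ^ n) f x| := by
  set r := n / 20 with hr
  set P := (Finset.Ioc (2 ^ m) (2 ^ r)).filter Nat.Prime with hP
  have hr1 : 1 ≤ r := by omega
  have hG := GG_lower' m r (by omega)
  have hl1 := Real.log_two_gt_d9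
  have hr0 : (1:ℝ) ≤ r := by exact_mod_cast hr1
  have hm0 : (24:ℝ) ≤ m := by exact_mod_cast hm
  have hG0 : 0 < GG P (2 ^ r) := by
    by_contra hcon
    push Not at hcon
    have : 4 * (m:ℝ) ^ 2 * GG P (2 ^ r) ≤ 0 := mul_nonpos_of_nonneg_of_nonpos (by positivity) hcon
    have : 0 < r * Real.log 2 := by positivity
    linarith
  have hs := sieve P (fun p hp => (Finset.mem_filter.1 hp).2) (2 ^ r) (2 ^ n)
    (fun p hp => (Finset.mem_Ioc.1 (Finset.mem_filter.1 hp).1).2) (by positivity) hG0 f hf x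
  have hsplit : ∑ p ∈ (Finset.range (2 ^ n + 1)).filter Nat.Prime, Real.log p * f (x + p) ≤
      ∑ p ∈ (Finset.range (2 ^ r + 1)).filter Nat.Prime, Real.log p * f (x + p) +
      ∑ p ∈ (Finset.range (2 ^ n + 1)).filter (fun p => p.Prime ∧ 2 ^ r < p), Real.log p * f (x + p) := by
    rw [← Finset.sum_union]
    · apply Finset.sum_le_sum_of_subset_of_nonneg
      · intro p hp
        simp only [Finset.mem_union, Finset.mem_filter, Finset.mem_range] at hp ⊢
        by_cases h : p < 2 ^ r + 1
        · exact Or.inl ⟨h, hp.2⟩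
        · exact Or.inr ⟨hp.1, hp.2, by omega⟩
      · intro p _ _
        exact mul_nonneg (Real.log_natCast_nonneg p) (hf _)
    · rw [Finset.disjoint_left]
      intro p h1 h2
      simp only [Finset.mem_filter, Finset.mem_range] at h1 h2
      omega
  have hsm : (∑ p ∈ (Finset.range (2 ^ r + 1)).filter Nat.Prime, Real.log p * f (x + p)) / 2 ^ n =
      sm n f x := by
    unfold sm
    rw [Finset.sum_div]
    apply Finset.sum_congr rfl
    intro p _
    ring
  calc _ ≤ _ := div_le_div_of_nonneg_right hsplit (by positivity)
    _ = sm n f x + (∑ p ∈ (Finset.range (2 ^ n + 1)).filter (fun p => p.Prime ∧ 2 ^ r < p),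
          Real.log p * f (x + p)) / (2 ^ n : ℕ) := by rw [add_div, hsm]; push_cast; rfl
    _ ≤ _ := by
        gcongr
        refine hs.trans ?_
        apply mul_le_mul_of_nonneg_right _ (Finset.sum_nonneg fun _ _ => by positivity)
        rw [div_le_iff₀ hG0]
        push_cast
        rw [Real.log_pow]
        have h40 : (n:ℝ) ≤ 40 * r := by exact_mod_cast (by omega : n ≤ 40 * r)
        nlinarith

lemma sum_W_le (m n : ℕ) (f : ℤ → ℝ) (x : ℤ) :
    ENNReal.ofReal (∑ W ∈ UU ((Finset.Ioc (2 ^ m) (2 ^ (n / 20))).filter Nat.Prime) ((2 ^ (n / 20)) ^ 2),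
          4 ^ W.card / (qW W : ℝ) * |av W (2 ^ n) f x|) ≤
      ‖av ∅ (2 ^ n) f x‖ₑ + ∑' s, ZZ m f s x := by
  classical
  set r := n / 20 with hr
  set P := (Finset.Ioc (2 ^ m) (2 ^ r)).filter Nat.Prime with hP
  rw [ENNReal.ofReal_sum_of_nonneg (fun _ _ => by positivity)]
  have e : ∀ W : Finset ℕ, ENNReal.ofReal (4 ^ W.card / (qW W : ℝ) * |av W (2 ^ n) f x|) =
      ENNReal.ofReal (4 ^ W.card / (qW W : ℝ)) * ‖av W (2 ^ n) f x‖ₑ := by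
    intro W
    rw [ENNReal.ofReal_mul (by positivity), enorm_real]
  simp_rw [e]
  have hPp : ∀ W ∈ UU P ((2 ^ r) ^ 2), ∀ p ∈ W, 2 ^ m < p ∧ p.Prime := by
    intro W hW p hp
    have := (Finset.mem_powerset.1 (Finset.mem_filter.1 hW).1) hp
    rw [hP, Finset.mem_filter, Finset.mem_Ioc] at this
    exact ⟨this.1.1, this.2⟩
  have hempty : ∅ ∈ UU P ((2 ^ r) ^ 2) := by
    have h1 : 1 ≤ (2 ^ r) ^ 2 := Nat.one_le_pow _ _ (Nat.pow_pos (by norm_num))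
    unfold UU
    refine Finset.mem_filter.2 ⟨Finset.empty_mem_powerset _, ?_⟩
    simp only [qW, Finset.prod_empty]
    exact h1
  rw [← Finset.add_sum_erase _ _ hempty]
  apply add_le_add
  · simp [qW]
  · have hmaps : ∀ W ∈ (UU P ((2 ^ r) ^ 2)).erase ∅, Nat.log 2 (qW W) ∈ Finset.range (2 * r + 1) := by
      intro W hW
      have h1 := Finset.mem_of_mem_erase hW
      have h2 : qW W ≤ (2 ^ r) ^ 2 := (Finset.mem_filter.1 h1).2
      rw [Finset.mem_range, Nat.lt_succ_iff]
      calc Nat.log 2 (qW W) ≤ Nat.log 2 ((2 ^ r) ^ 2) := Nat.log_mono_right h2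
        _ = 2 * r := by rw [← pow_mul, Nat.log_pow (by norm_num), mul_comm]
    rw [← Finset.sum_fiberwise_of_maps_to hmaps]
    refine le_trans ?_ (ENNReal.sum_le_tsum (Finset.range (2 * r + 1)))
    apply Finset.sum_le_sum
    intro s hs
    rw [Finset.mem_range] at hs
    have h9 : 9 * s ≤ n := by omega
    unfold ZZ
    refine le_trans ?_ (le_iSup (fun j : ℕ => ∑ W ∈ BB m s, ENNReal.ofReal (4 ^ W.card / qW W) *
      ‖av W (2 ^ (9 * s + j)) f x‖ₑ) (n - 9 * s))
    rw [show 9 * s + (n - 9 * s) = n by omega]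
    apply Finset.sum_le_sum_of_subset
    intro W hW
    rw [Finset.mem_filter] at hW
    have hne := Finset.ne_of_mem_erase hW.1
    have h1 := Finset.mem_of_mem_erase hW.1
    have hpr := hPp W h1
    have hq := qW_pos fun p hp => (hpr p hp).2
    have hlt : qW W < 2 ^ (s + 1) := by rw [← hW.2]; exact Nat.lt_pow_succ_log_self (by norm_num) _
    have hge : 2 ^ s ≤ qW W := by rw [← hW.2]; exact Nat.pow_log_le_self 2 hq.ne'
    unfold BB
    rw [Finset.mem_filter, Finset.mem_powerset]
    refine ⟨?_, hne, hge, hlt⟩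
    intro p hp
    rw [Finset.mem_filter, Finset.mem_Ioc]
    exact ⟨⟨(hpr p hp).1, (le_qW (fun p hp => (hpr p hp).2) hp).trans hlt.le⟩, (hpr p hp).2⟩

/-- main estimate -/
lemma core (m : ℕ) (hm : 24 ≤ m) (ρ : ℝ) (hρ0 : 0 < ρ) (hρ1 : ρ < 1) (hρ : ρ ^ 8 = 1 / 2)
    (f : ℤ → ℝ) (hf0 : ∀ x, 0 ≤ f x) (hf : f.support.Finite) :
    ∃ E : ℤ → ℝ≥0∞, nrm E ≤ ENNReal.ofReal (7041 / (1 - ρ) * (m:ℝ) ^ 2 * ρ ^ m) * rn f ∧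
      ∀ n, 1 ≤ n → ∀ x, ENNReal.ofReal (mf n f x) ≤
        ENNReal.ofReal (2 ^ 16 * 160 * (m:ℝ) ^ 2 * (psum 1 f (2 ^ n) x / (2 ^ n : ℕ))) +
          ENNReal.ofReal (2 ^ 16) * E x := by
  have hgeo : ∑' n : ℕ, ρ ^ n = (1 - ρ)⁻¹ := tsum_geometric_of_lt_one hρ0.le hρ1
  have hgs : Summable (fun n : ℕ => ρ ^ n) := summable_geometric_of_lt_one hρ0.le hρ1
  have h1ρ : 0 < 1 - ρ := by linarith
  have hm1 : (1:ℝ) ≤ (m:ℝ) ^ 2 := by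
    have : (24:ℝ) ≤ m := by exact_mod_cast hm
    nlinarith
  refine ⟨fun x => ∑' n : ℕ, (if 20 * m ≤ n then ‖sm n f x‖ₑ else 0) +
    ENNReal.ofReal (160 * (m:ℝ) ^ 2) * ∑' s, ZZ m f s x, ?_, ?_⟩
  · refine (nrm_add_le _ _).trans ?_
    rw [nrm_const_mul]
    have b1 : nrm (fun x => ∑' n : ℕ, (if 20 * m ≤ n then ‖sm n f x‖ₑ else 0)) ≤
        ENNReal.ofReal (ρ ^ m / (1 - ρ)) * rn f := by
      refine (nrm_tsum_le _).trans ?_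
      calc _ ≤ ∑' n : ℕ, ENNReal.ofReal (ρ ^ m * ρ ^ n) * rn f := by
            apply ENNReal.tsum_le_tsum
            intro n
            by_cases h : 20 * m ≤ n
            · simp only [h, if_true]
              exact sm_bound m ρ hρ0 hρ f n h
            · simp only [h, if_false, nrm_zero]
              exact zero_le
        _ = _ := by
            rw [ENNReal.tsum_mul_right, ← ENNReal.ofReal_tsum_of_nonneg (fun n => by positivity)
              (hgs.mul_left _), tsum_mul_left, hgeo, div_eq_mul_inv]
    have b2 : nrm (fun x => ∑' s, ZZ m f s x) ≤ ENNReal.ofReal (44 * ρ ^ m / (1 - ρ)) * rn f := by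
      refine (nrm_tsum_le _).trans ?_
      calc _ ≤ ∑' n : ℕ, ENNReal.ofReal (44 * ρ ^ m * ρ ^ n) * rn f :=
            ENNReal.tsum_le_tsum fun s => ZZ_bound m hm ρ hρ0 hρ1 hρ f hf0 hf s
        _ = _ := by
            rw [ENNReal.tsum_mul_right, ← ENNReal.ofReal_tsum_of_nonneg (fun n => by positivity)
              (hgs.mul_left _), tsum_mul_left, hgeo, div_eq_mul_inv]
    refine (add_le_add b1 (mul_le_mul' (le_refl _) b2)).trans ?_
    rw [← mul_assoc, ← ENNReal.ofReal_mul (by positivity), ← add_mul,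
      ← ENNReal.ofReal_add (by positivity) (by positivity)]
    gcongr ENNReal.ofReal ?_ * _
    have hx : 0 < ρ ^ m / (1 - ρ) := by positivity
    calc ρ ^ m / (1 - ρ) + 160 * (m:ℝ) ^ 2 * (44 * ρ ^ m / (1 - ρ))
        = (1 + 7040 * (m:ℝ) ^ 2) * (ρ ^ m / (1 - ρ)) := by ring
      _ ≤ (7041 * (m:ℝ) ^ 2) * (ρ ^ m / (1 - ρ)) := by
          apply mul_le_mul_of_nonneg_right _ hx.le
          linarith
      _ = _ := by ring
  · intro n hn x
    have hmf := mf_le n hn f hf0 x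
    refine (ENNReal.ofReal_le_ofReal hmf).trans ?_
    rw [show (2:ℝ) ^ 16 * 160 * (m:ℝ) ^ 2 * (psum 1 f (2 ^ n) x / (2 ^ n : ℕ)) =
      2 ^ 16 * (160 * (m:ℝ) ^ 2 * (psum 1 f (2 ^ n) x / (2 ^ n : ℕ))) by ring,
      ENNReal.ofReal_mul (by positivity), ENNReal.ofReal_mul (by positivity), ← mul_add]
    gcongr
    rcases Nat.lt_or_ge n (20 * m) with h | h
    · exact (ENNReal.ofReal_le_ofReal (small_n m n h.le f hf0 x)).trans le_self_add
    · refine (ENNReal.ofReal_le_ofReal (large_n m n hm h f hf0 x)).trans ?_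
      refine ENNReal.ofReal_add_le.trans ?_
      rw [ENNReal.ofReal_mul (by positivity), ENNReal.ofReal_mul (by positivity : (0:ℝ) ≤ 160 * (m:ℝ) ^ 2)]
      have h1 : ENNReal.ofReal (sm n f x) ≤ ∑' n : ℕ, (if 20 * m ≤ n then ‖sm n f x‖ₑ else 0) := by
        refine le_trans ?_ (ENNReal.le_tsum n)
        rw [if_pos h, enorm_real]
        exact ENNReal.ofReal_le_ofReal (le_abs_self _)
      have h2 := sum_W_le m n f x
      have h3 : ‖av ∅ (2 ^ n) f x‖ₑ = ENNReal.ofReal (psum 1 f (2 ^ n) x / (2 ^ n : ℕ)) := by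
        rw [enorm_real, av_empty, abs_of_nonneg]
        exact div_nonneg (Finset.sum_nonneg fun _ _ => hf0 _) (by positivity)
      rw [h3] at h2
      calc _ ≤ (∑' n : ℕ, (if 20 * m ≤ n then ‖sm n f x‖ₑ else 0)) +
            ENNReal.ofReal (160 * (m:ℝ) ^ 2) * (ENNReal.ofReal (psum 1 f (2 ^ n) x / (2 ^ n : ℕ)) +
              ∑' s, ZZ m f s x) := add_le_add h1 (mul_le_mul' (le_refl _) h2)
        _ = _ := by rw [mul_add]; ring

end PM

namespace PM
open scoped ENNReal
open MeasureTheory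

lemma l2conv (b : ℕ → ℤ → ℝ) (hb : ∀ n x, 0 ≤ b n x) (Φ : ℤ → ℝ≥0∞) (F : ℤ → ℝ)
    (hF : F.support.Finite) (Y : ℝ) (hY : 0 ≤ Y)
    (h : ∀ n, 1 ≤ n → ∀ x, ENNReal.ofReal (b n x) ≤ Φ x)
    (hΦ : nrm Φ ≤ ENNReal.ofReal Y * rn F) :
    Real.sqrt (∑' x : ℤ, (⨆ (n : ℕ) (_ : 1 ≤ n), b n x) ^ 2) ≤
      Y * Real.sqrt (∑' x : ℤ, F x ^ 2) := by
  set G : ℤ → ℝ := fun x => ⨆ (n : ℕ) (_ : 1 ≤ n), b n x with hG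
  have hS0 : 0 ≤ ∑' x : ℤ, F x ^ 2 := tsum_nonneg fun _ => sq_nonneg _
  have hG0 : ∀ x, 0 ≤ G x := fun x =>
    Real.iSup_nonneg fun n => Real.iSup_nonneg fun _ => hb n x
  have hGΦ : ∀ x, ENNReal.ofReal (G x) ≤ Φ x := by
    intro x
    by_cases hx : Φ x = ⊤
    · rw [hx]; exact le_top
    · apply ENNReal.ofReal_le_of_le_toReal
      apply Real.iSup_le _ ENNReal.toReal_nonneg
      intro n
      apply Real.iSup_le _ ENNReal.toReal_nonneg
      intro hn
      exact (ENNReal.ofReal_le_iff_le_toReal hx).1 (h n hn x)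
  have key : ∑' x : ℤ, G x ^ 2 ≤ Y ^ 2 * ∑' x : ℤ, F x ^ 2 := by
    by_cases hs : Summable fun x => G x ^ 2
    · have h1 : ENNReal.ofReal (∑' x : ℤ, G x ^ 2) ≤
          ENNReal.ofReal (Y ^ 2 * ∑' x : ℤ, F x ^ 2) := by
        rw [ENNReal.ofReal_tsum_of_nonneg (fun _ => sq_nonneg _) hs]
        calc ∑' x, ENNReal.ofReal (G x ^ 2) = ∑' x, ENNReal.ofReal (G x) ^ 2 := by
              congr 1; ext x; rw [ENNReal.ofReal_pow (hG0 x)]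
          _ ≤ ∑' x, Φ x ^ 2 := ENNReal.tsum_le_tsum fun x => by
              gcongr; exact hGΦ x
          _ = nrm Φ ^ 2 := (nrm_sq Φ).symm
          _ ≤ (ENNReal.ofReal Y * rn F) ^ 2 := by gcongr
          _ = _ := by
              rw [mul_pow, rn_sq F hF, ENNReal.ofReal_mul (by positivity), ENNReal.ofReal_pow hY]
      exact (ENNReal.ofReal_le_ofReal_iff (by positivity)).1 h1
    · rw [tsum_eq_zero_of_not_summable hs]; positivity
  calc Real.sqrt (∑' x : ℤ, G x ^ 2) ≤ Real.sqrt (Y ^ 2 * ∑' x : ℤ, F x ^ 2) :=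
        Real.sqrt_le_sqrt key
    _ = _ := by rw [Real.sqrt_mul (by positivity), Real.sqrt_sq hY]

lemma norm_avg_le (f : ℤ → ℂ) (n : ℕ) (x : ℤ) :
    ‖weightedPrimeAvg f (2 ^ n) x‖ ≤ mf n (fun y => ‖f y‖) x := by
  unfold weightedPrimeAvg mf
  have hl : ∀ p : ℕ, 0 ≤ Real.log p := fun p => Real.log_natCast_nonneg p
  have ht : 0 ≤ theta (2 ^ n) := Finset.sum_nonneg fun p _ => hl p
  rw [norm_mul, norm_inv, Complex.norm_real, Real.norm_of_nonneg ht]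
  apply mul_le_mul_of_nonneg_left _ (inv_nonneg.2 ht)
  refine (norm_sum_le _ _).trans (le_of_eq ?_)
  unfold primesUpTo
  apply Finset.sum_congr rfl
  intro p _
  rw [norm_mul, Complex.norm_real, Real.norm_of_nonneg (hl p), mul_comm]

lemma sq_mul_exp (L : ℝ) (hL : 0 < L) (m : ℕ) (s : ℝ) (hs : s ≤ m + 1) :
    (m:ℝ) ^ 2 * Real.exp (-L) ^ m ≤ 8 / L ^ 2 * Real.exp (L / 2) * Real.exp (-(L / 2) * s) := by
  have h1 := Real.quadratic_le_exp_of_nonneg (x := m * L / 2) (by positivity)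
  have h2 : (m:ℝ) ^ 2 ≤ 8 / L ^ 2 * Real.exp (m * L / 2) := by
    rw [div_mul_eq_mul_div, le_div_iff₀ (by positivity)]
    have : 0 ≤ m * L / 2 := by positivity
    nlinarith
  calc (m:ℝ) ^ 2 * Real.exp (-L) ^ m
      ≤ (8 / L ^ 2 * Real.exp (m * L / 2)) * Real.exp (-L) ^ m := by gcongr
    _ = 8 / L ^ 2 * Real.exp (-(m * L / 2)) := by
        rw [← Real.exp_nat_mul, mul_assoc, ← Real.exp_add]; ring_nf
    _ ≤ 8 / L ^ 2 * Real.exp (L / 2 + -(L / 2) * s) := by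
        gcongr
        nlinarith
    _ = _ := by rw [Real.exp_add, mul_assoc]

/-- The main result, proved inside the namespace. -/
theorem main_result :
    ∃ C c : ℝ, 0 < C ∧ 0 < c ∧
      ∀ t : ℝ, 0 < t →
        ∃ A B : ℕ → (ℤ → ℂ) → (ℤ → ℂ),
          ∀ (f : ℤ → ℂ), (Function.support f).Finite →
            (∀ n : ℕ, 1 ≤ n → ∀ x : ℤ, weightedPrimeAvg f (2 ^ n) x = A n f x + B n f x) ∧
            (∀ l : ℝ, 0 < l →
              {x : ℤ | ∃ n : ℕ, 1 ≤ n ∧ l < ‖A n f x‖}.Finite ∧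
              l * (({x : ℤ | ∃ n : ℕ, 1 ≤ n ∧ l < ‖A n f x‖}.ncard : ℝ)) ≤
                C * t * ∑' m : ℤ, ‖f m‖) ∧
            Real.sqrt (∑' x : ℤ, (⨆ (n : ℕ) (_ : 1 ≤ n), ‖B n f x‖) ^ 2) ≤
              C * Real.exp (-c * Real.sqrt t) * Real.sqrt (∑' x : ℤ, ‖f x‖ ^ 2) := by
  have hlog : 0 < Real.log 2 := Real.log_pos (by norm_num)
  obtain ⟨L, hL⟩ : ∃ L : ℝ, L = Real.log 2 / 8 := ⟨_, rfl⟩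
  have hL0 : 0 < L := by rw [hL]; positivity
  obtain ⟨ρ, hρd⟩ : ∃ ρ : ℝ, ρ = Real.exp (-L) := ⟨_, rfl⟩
  have hρ0 : 0 < ρ := by rw [hρd]; positivity
  have hρ1 : ρ < 1 := by rw [hρd, Real.exp_lt_one_iff]; linarith
  have hρ : ρ ^ 8 = 1 / 2 := by
    rw [hρd, ← Real.exp_nat_mul, hL]
    rw [show ((8:ℕ):ℝ) * -(Real.log 2 / 8) = -Real.log 2 by push_cast; ring, Real.exp_neg,
      Real.exp_log (by norm_num)]
    norm_num
  have h1ρ : 0 < 1 - ρ := by linarith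
  obtain ⟨κ, hκ⟩ : ∃ κ : ℝ, κ = 2 ^ 16 * 160 := ⟨_, rfl⟩
  have hκ0 : 0 < κ := by rw [hκ]; norm_num
  obtain ⟨K0, hK0⟩ : ∃ K : ℝ, K = 7041 / (1 - ρ) := ⟨_, rfl⟩
  have hK0p : 0 < K0 := by rw [hK0]; positivity
  obtain ⟨K1, hK1⟩ : ∃ K : ℝ, K = κ * 576 * 2 + 2 ^ 16 * (K0 * 576 * ρ ^ 24) := ⟨_, rfl⟩
  have hK1p : 0 < K1 := by rw [hK1]; positivity
  obtain ⟨K2, hK2⟩ : ∃ K : ℝ, K = 2 ^ 17 * K0 * (8 / L ^ 2 * Real.exp (L / 2)) := ⟨_, rfl⟩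
  have hK2p : 0 < K2 := by rw [hK2]; positivity
  obtain ⟨K3, hK3⟩ : ∃ K : ℝ, K = K1 * Real.exp (L / 2 * 24) := ⟨_, rfl⟩
  have hK3p : 0 < K3 := by rw [hK3]; positivity
  refine ⟨2 * κ + K3 + K2, L / 2, by positivity, by positivity, ?_⟩
  intro t ht
  rcases lt_or_ge t 576 with ht1 | ht1
  · refine ⟨fun _ _ _ => 0, fun n f x => weightedPrimeAvg f (2 ^ n) x, ?_⟩
    intro f hf
    have hF : (fun y => ‖f y‖).support.Finite := by
      refine hf.subset fun x hx => ?_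
      simpa using hx
    refine ⟨fun n _ x => by simp, ?_, ?_⟩
    · intro l hl
      have : {x : ℤ | ∃ n : ℕ, 1 ≤ n ∧ l < ‖(0:ℂ)‖} = ∅ := by
        ext x
        simp only [norm_zero, Set.mem_ofPred_eq, Set.mem_empty_iff_false, iff_false]
        rintro ⟨n, _, h⟩
        linarith
      rw [this]
      refine ⟨Set.finite_empty, ?_⟩
      have : 0 ≤ ∑' m : ℤ, ‖f m‖ := tsum_nonneg fun _ => norm_nonneg _
      simp only [Set.ncard_empty, Nat.cast_zero, mul_zero]
      positivity
    · obtain ⟨E, hE1, hE2⟩ := core 24 le_rfl ρ hρ0 hρ1 hρ (fun y => ‖f y‖)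
        (fun _ => norm_nonneg _) hF
      have := l2conv (fun n x => ‖weightedPrimeAvg f (2 ^ n) x‖) (fun _ _ => norm_nonneg _)
        (fun x => ENNReal.ofReal (κ * 576) * HL 1 (fun y => ‖f y‖) x + ENNReal.ofReal (2 ^ 16) * E x)
        (fun y => ‖f y‖) hF K1 hK1p.le ?_ ?_
      · refine this.trans ?_
        gcongr
        have h1 : Real.sqrt t ≤ 24 := by
          rw [Real.sqrt_le_left (by norm_num)]; linarith
        have h2 : K1 ≤ K3 * Real.exp (-(L / 2) * Real.sqrt t) := by
          rw [hK3, mul_assoc, ← Real.exp_add]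
          have : 1 ≤ Real.exp (L / 2 * 24 + -(L / 2) * Real.sqrt t) := by
            rw [Real.one_le_exp_iff]
            nlinarith
          nlinarith
        refine h2.trans ?_
        gcongr
        linarith
      · intro n hn x
        refine (ENNReal.ofReal_le_ofReal (norm_avg_le f n x)).trans ((hE2 n hn x).trans ?_)
        gcongr ?_ + _
        rw [show (2:ℝ) ^ 16 * 160 * ((24:ℕ):ℝ) ^ 2 = κ * 576 by rw [hκ]; norm_num,
          ENNReal.ofReal_mul (by positivity)]
        gcongr
        exact le_iSup (fun J : ℕ => ENNReal.ofReal (psum 1 (fun y => ‖f y‖) J x / J)) (2 ^ n)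
      · refine (nrm_add_le _ _).trans ?_
        rw [nrm_const_mul, nrm_const_mul]
        have h1 := HL_nrm 1 (fun y => ‖f y‖) (fun _ => norm_nonneg _) hF
        refine (add_le_add (mul_le_mul' le_rfl h1) (mul_le_mul' le_rfl hE1)).trans ?_
        rw [← mul_assoc, ← mul_assoc, ← ENNReal.ofReal_mul (by positivity), ← add_mul,
          show (2:ENNReal) = ENNReal.ofReal 2 by simp, ← ENNReal.ofReal_mul (by positivity),
          ← ENNReal.ofReal_add (by positivity) (by positivity)]
        gcongr ENNReal.ofReal ?_ * _
        rw [hK1, hK0]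
        norm_num
  · obtain ⟨m, hm⟩ : ∃ m : ℕ, m = ⌊Real.sqrt t⌋₊ := ⟨_, rfl⟩
    have hm24 : 24 ≤ m := by
      rw [hm]
      apply Nat.le_floor
      apply Real.le_sqrt_of_sq_le
      norm_num
      exact ht1
    have hms : (m:ℝ) ≤ Real.sqrt t := by rw [hm]; exact Nat.floor_le (Real.sqrt_nonneg _)
    have hsm : Real.sqrt t ≤ m + 1 := by rw [hm]; exact (Nat.lt_floor_add_one _).le
    have hm2 : (m:ℝ) ^ 2 ≤ t := by
      calc (m:ℝ) ^ 2 ≤ Real.sqrt t ^ 2 := by gcongr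
        _ = t := Real.sq_sqrt ht.le
    have hm0 : (0:ℝ) < m := by
      have : 0 < m := by omega
      exact_mod_cast this
    obtain ⟨H, hH⟩ : ∃ H : ℝ, H = κ * (m:ℝ) ^ 2 := ⟨_, rfl⟩
    have hH0 : 0 < H := by rw [hH]; positivity
    classical
    let P : ℕ → (ℤ → ℂ) → ℤ → Prop := fun n f x => ‖weightedPrimeAvg f (2 ^ n) x‖ ≤
        2 * H * (psum 1 (fun y => ‖f y‖) (2 ^ n) x / (2 ^ n : ℕ))
    refine ⟨fun n f x => if P n f x then weightedPrimeAvg f (2 ^ n) x else 0,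
      fun n f x => if P n f x then 0 else weightedPrimeAvg f (2 ^ n) x, ?_⟩
    intro f hf
    have hF : (fun y => ‖f y‖).support.Finite := by
      refine hf.subset fun x hx => ?_
      simpa using hx
    refine ⟨fun n _ x => by by_cases h : P n f x <;> simp [h], ?_, ?_⟩
    · intro l hl
      obtain ⟨w1, w2⟩ := weak (fun y => ‖f y‖) (fun _ => norm_nonneg _) hF (l / (2 * H))
        (by positivity)
      have hsub : {x : ℤ | ∃ n : ℕ, 1 ≤ n ∧
          l < ‖(if P n f x then weightedPrimeAvg f (2 ^ n) x else 0)‖} ⊆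
          {x | ∃ J : ℕ, l / (2 * H) * J < psum 1 (fun y => ‖f y‖) J x} := by
        rintro x ⟨n, hn, hx⟩
        by_cases h : P n f x
        · rw [if_pos h] at hx
          refine ⟨2 ^ n, ?_⟩
          have h3 := hx.trans_le h
          have h4 : (0:ℝ) < (2 ^ n : ℕ) := by positivity
          rw [mul_div_assoc', lt_div_iff₀ h4] at h3
          rw [div_mul_eq_mul_div, div_lt_iff₀ (by positivity)]
          linarith
        · rw [if_neg h, norm_zero] at hx
          linarith
      refine ⟨w1.subset hsub, ?_⟩
      have hc := Set.ncard_le_ncard hsub w1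
      have hc' : ((Set.ncard {x : ℤ | ∃ n : ℕ, 1 ≤ n ∧
          l < ‖(if P n f x then weightedPrimeAvg f (2 ^ n) x else 0)‖} : ℕ) : ℝ) ≤
          (Set.ncard {x | ∃ J : ℕ, l / (2 * H) * J < psum 1 (fun y => ‖f y‖) J x} : ℕ) := by
        exact_mod_cast hc
      refine (mul_le_mul_of_nonneg_left hc' hl.le).trans ?_
      have hS : 0 ≤ ∑' m : ℤ, ‖f m‖ := tsum_nonneg fun _ => norm_nonneg _
      rw [div_mul_eq_mul_div, div_le_iff₀ (by positivity)] at w2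
      refine w2.trans ?_
      rw [mul_comm]
      apply mul_le_mul_of_nonneg_right _ hS
      rw [hH]
      calc 2 * (κ * (m:ℝ) ^ 2) = 2 * κ * (m:ℝ) ^ 2 := by ring
        _ ≤ (2 * κ + K3 + K2) * t := by
          gcongr
          linarith
    · obtain ⟨E, hE1, hE2⟩ := core m hm24 ρ hρ0 hρ1 hρ (fun y => ‖f y‖)
        (fun _ => norm_nonneg _) hF
      have := l2conv (fun n x => ‖(if P n f x then 0 else weightedPrimeAvg f (2 ^ n) x)‖)
        (fun _ _ => norm_nonneg _)
        (fun x => ENNReal.ofReal (2 ^ 17) * E x)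
        (fun y => ‖f y‖) hF (2 ^ 17 * (K0 * (m:ℝ) ^ 2 * ρ ^ m)) (by positivity) ?_ ?_
      · refine this.trans ?_
        apply mul_le_mul_of_nonneg_right _ (Real.sqrt_nonneg _)
        have h1 := sq_mul_exp L hL0 m _ hsm
        rw [← hρd] at h1
        calc 2 ^ 17 * (K0 * (m:ℝ) ^ 2 * ρ ^ m) = 2 ^ 17 * K0 * ((m:ℝ) ^ 2 * ρ ^ m) := by ring
          _ ≤ 2 ^ 17 * K0 * (8 / L ^ 2 * Real.exp (L / 2) * Real.exp (-(L / 2) * Real.sqrt t)) := by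
              gcongr
          _ = K2 * Real.exp (-(L / 2) * Real.sqrt t) := by rw [hK2]; ring
          _ ≤ _ := by
              apply mul_le_mul_of_nonneg_right _ (Real.exp_pos _).le
              linarith
      · intro n hn x
        by_cases h : P n f x
        · simp [h]
        · simp only [h, if_false]
          by_cases hx : E x = ⊤
          · rw [hx, ENNReal.mul_top (by simp)]; exact le_top
          have h1 := (ENNReal.ofReal_le_ofReal (norm_avg_le f n x)).trans (hE2 n hn x)
          rw [← hκ, ← hH] at h1
          have h2 : 2 * H * (psum 1 (fun y => ‖f y‖) (2 ^ n) x / (2 ^ n : ℕ)) <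
            ‖weightedPrimeAvg f (2 ^ n) x‖ := not_le.1 h
          have h0 : 0 ≤ H * (psum 1 (fun y => ‖f y‖) (2 ^ n) x / (2 ^ n : ℕ)) :=
            mul_nonneg hH0.le (div_nonneg (psum_nonneg (fun _ => norm_nonneg _) _ _) (by positivity))
          rw [← ENNReal.ofReal_toReal hx, ← ENNReal.ofReal_mul (by positivity)] at h1 ⊢
          rw [← ENNReal.ofReal_add h0 (by positivity)] at h1
          have h3 := (ENNReal.ofReal_le_ofReal_iff (by positivity)).1 h1
          apply ENNReal.ofReal_le_ofReal
          linarith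
      · rw [nrm_const_mul, ENNReal.ofReal_mul (by positivity), mul_assoc, hK0]
        gcongr

end PM

/-- For each `t > 0` the operators `ℳ_{2^n}` split as `A_n^t + B_n^t`, where the maximal
function of `A_n^t` has weak `ℓ¹` norm `≤ C t ‖f‖₁` and the maximal function of `B_n^t`
has `ℓ²` norm `≤ C exp(−c√t) ‖f‖₂`. -/
theorem stmt_17 :
    ∃ C c : ℝ, 0 < C ∧ 0 < c ∧
      ∀ t : ℝ, 0 < t →
        ∃ A B : ℕ → (ℤ → ℂ) → (ℤ → ℂ),
          ∀ (f : ℤ → ℂ), (Function.support f).Finite →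
            (∀ n : ℕ, 1 ≤ n → ∀ x : ℤ, weightedPrimeAvg f (2 ^ n) x = A n f x + B n f x) ∧
            (∀ l : ℝ, 0 < l →
              {x : ℤ | ∃ n : ℕ, 1 ≤ n ∧ l < ‖A n f x‖}.Finite ∧
              l * (({x : ℤ | ∃ n : ℕ, 1 ≤ n ∧ l < ‖A n f x‖}.ncard : ℝ)) ≤
                C * t * ∑' m : ℤ, ‖f m‖) ∧
            Real.sqrt (∑' x : ℤ, (⨆ (n : ℕ) (_ : 1 ≤ n), ‖B n f x‖) ^ 2) ≤
              C * Real.exp (-c * Real.sqrt t) * Real.sqrt (∑' x : ℤ, ‖f x‖ ^ 2) := by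
  exact PM.main_result
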